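/- There exists a constant d ≥ 1 such that for every integer p ≥ 1 there is a constant C_p > 0 with the following property: for every real s with |s| < 1/d and every n ∈ ℕ, ‖U_p(s)·ψ_n − e^(−is(n+1/2))·ψ_n‖_{L²} ≤ C_p·(n+2)·|s|^(2p+1). (Equivalently, the Trotter–Suzuki error operator ε_p(s) = U_p(s)U(−s) − 1 satisfies ‖ε_p(s)|ψ_n⟩‖ = O((n+2)|s|^(2p+1)), using U(−s)ψ_n = e^(is(n+1/2))ψ_n.) -/

import Mathlib

/-!
All operators involved are exponentials of quadratic expressions in position `x` and derivative, so
they are governed by `2 × 2` real matrices, and the whole estimate reduces to finite-dimensional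
order conditions.

**From operators to matrices.** `Implements T S` records that conjugation by `T` acts on
`(x, i d/dx)` through the matrix `S`, that `T` maps Gaussians to Gaussians accordingly, and that `T`
preserves the `L²` norm. It holds for chirps and Fourier multipliers (`rep_ML`, `rep_PP`) and is
stable under composition (`Implements.comp`). The matrix determines the operator on Hermite
functions up to a sign: the ladder operators generate the Hermite functions from the ground state,
and the image of the ground state is a Gaussian whose squared prefactor is determined by the matrix.
The sign is fixed by closeness to the identity (`Implements.unique`). For the rotation matrix
`Rot s`, the operator acts on the Hermite functions by the phases `e^{-is(n+1/2)}`
(`Implements.rot`).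

**Order conditions.** The matrix of `U_{q+1}(s)` agrees with `Rot s` up to `O(s^{2q+3})`
(`order_SM`). The Suzuki coefficient cancels the leading error term in one step of the recursion.
The off-diagonal entries are odd analytic functions, so the next order vanishes as well
(`odd_boost`). The determinant condition carries the estimate to the diagonal (`Palin.diag_order`).

**Back to operators.** Near `s = 0` both `U_{q+1}(s)` and the exact flow coincide on Hermite
functions with symmetric splittings `M(α) P(β) M(α)`, whose parameters are smooth functions of the
matrix entries (`rep_alpha`) and therefore differ by `O(s^{2q+3})`. Changing `α` or `β` in such a
splitting costs at most the change times the norm of a quadratic operator applied to the Hermite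
function, which is `O(n+2)` (`nrm_MPM_sub`, `herm_quad`). This gives the bound near `0`
(`small_bound`). For `s` bounded away from `0` the error is at most `2`, so `d = 1` works.
-/

open MeasureTheory Complex
open scoped BigOperators Matrix Kronecker

noncomputable section

/-- The `n`-th physicists' Hermite polynomial. -/
def hermiteH (n : ℕ) (x : ℝ) : ℝ :=
  (-1 : ℝ) ^ n * Real.exp (x ^ 2) * iteratedDeriv n (fun y => Real.exp (-y ^ 2)) x

/-- The `n`-th Hermite function. -/
def hermiteFn (n : ℕ) (x : ℝ) : ℝ :=
  (1 / Real.sqrt (2 ^ n * n.factorial * Real.sqrt Real.pi)) * Real.exp (-x ^ 2 / 2) * hermiteH n x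

/-- The Fourier transform `(Ff)(ξ) = (2π)^{-1/2} ∫ f(x) e^{-iξx} dx`. -/
def fourierT (f : ℝ → ℂ) (ξ : ℝ) : ℂ :=
  (((2 * Real.pi) ^ (-(1 : ℝ) / 2) : ℝ) : ℂ) * ∫ x : ℝ, f x * Complex.exp (-Complex.I * ξ * x)

/-- The inverse Fourier transform `(F⁻¹g)(x) = (2π)^{-1/2} ∫ g(ξ) e^{iξx} dξ`. -/
def fourierTInv (g : ℝ → ℂ) (x : ℝ) : ℂ :=
  (((2 * Real.pi) ^ (-(1 : ℝ) / 2) : ℝ) : ℂ) * ∫ ξ : ℝ, g ξ * Complex.exp (Complex.I * ξ * x)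

/-- The multiplication operator `M(a) : f ↦ (x ↦ e^{-iax²} f(x))`. -/
def Mop (a : ℝ) (f : ℝ → ℂ) : ℝ → ℂ := fun x => Complex.exp (-Complex.I * a * x ^ 2) * f x

/-- The operator `P(a) : f ↦ F⁻¹(ξ ↦ e^{-iaξ²} (Ff)(ξ))`. -/
def Pop (a : ℝ) (f : ℝ → ℂ) : ℝ → ℂ :=
  fourierTInv fun ξ => Complex.exp (-Complex.I * a * ξ ^ 2) * fourierT f ξ

/-- The continuous-variable Trotter–Suzuki approximants:
`U₁(s) = M(s/4) ∘ P(s/2) ∘ M(s/4)` and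
`U_{p+1}(s) = U_p(s_p)² ∘ U_p(s - 4s_p) ∘ U_p(s_p)²`, `s_p = s/(4 - 4^{1/(2p+1)})`. -/
def Uapprox : ℕ → ℝ → (ℝ → ℂ) → (ℝ → ℂ)
  | 0, _, f => f
  | 1, s, f => Mop (s / 4) (Pop (s / 2) (Mop (s / 4) f))
  | p + 2, s, f =>
      let sp := s / (4 - (4 : ℝ) ^ ((1 : ℝ) / (2 * ((p : ℝ) + 1) + 1)))
      Uapprox (p + 1) sp (Uapprox (p + 1) sp (Uapprox (p + 1) (s - 4 * sp)
        (Uapprox (p + 1) sp (Uapprox (p + 1) sp f))))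

/-- The `n`-th Hermite function, as a complex-valued function. -/
def hermiteFnC (n : ℕ) : ℝ → ℂ := fun x => (hermiteFn n x : ℂ)

/-- The L² norm `‖f‖ = (∫ |f(x)|² dx)^{1/2}`. -/
def l2norm (f : ℝ → ℂ) : ℝ := Real.sqrt (∫ x : ℝ, Complex.normSq (f x))

open scoped SchwartzMap FourierTransform
open SchwartzMap Filter Topology

/-! ### Position, derivative, chirps and Fourier multipliers on the Schwartz space -/

/-- Multiplication by `x`. -/
def XX : 𝓢(ℝ, ℂ) →L[ℂ] 𝓢(ℝ, ℂ) := smulLeftCLM ℂ (fun x : ℝ => (x : ℂ))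

/-- Differentiation. -/
def DD : 𝓢(ℝ, ℂ) →L[ℂ] 𝓢(ℝ, ℂ) := derivCLM ℂ ℂ

lemma XX_apply (f : 𝓢(ℝ, ℂ)) (x : ℝ) : XX f x = x * f x := by
  rw [XX, smulLeftCLM_apply_apply (by fun_prop)]; simp

lemma DD_apply (f : 𝓢(ℝ, ℂ)) (x : ℝ) : DD f x = deriv f x := derivCLM_apply _ _ _

lemma expI_temperate : Function.HasTemperateGrowth (fun t : ℝ => Complex.exp (Complex.I * t)) := by
  refine ⟨Complex.contDiff_exp.comp (contDiff_const.mul Complex.ofRealCLM.contDiff),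
    fun n => ⟨0, 1, fun x => ?_⟩⟩
  rw [norm_iteratedFDeriv_eq_norm_iteratedDeriv]
  have : iteratedDeriv n (fun t : ℝ => Complex.exp (Complex.I * t)) =
      fun t : ℝ => Complex.I ^ n * Complex.exp (Complex.I * t) := by
    induction n with
    | zero => simp
    | succ k ih =>
      rw [iteratedDeriv_succ, ih]
      ext t
      have h : HasDerivAt (fun t : ℝ => Complex.exp (Complex.I * t))
          (Complex.exp (Complex.I * t) * (Complex.I * 1)) t :=
        ((Complex.ofRealCLM.hasDerivAt (x := t)).const_mul Complex.I).cexp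
      rw [(h.const_mul _).deriv]; ring
  rw [this]
  simp [mul_comm Complex.I, Complex.norm_exp_ofReal_mul_I]

lemma chirp_temperate (a : ℝ) :
    Function.HasTemperateGrowth (fun x : ℝ => Complex.exp (-Complex.I * a * x ^ 2)) := by
  have h : Function.HasTemperateGrowth (fun x : ℝ => -a * x ^ 2) := by fun_prop
  have := expI_temperate.comp h
  convert this using 2 with x
  simp only [Function.comp]
  push_cast
  ring_nf

/-- The chirp multiplication `M(a)` on the Schwartz space. -/
def MM (a : ℝ) : 𝓢(ℝ, ℂ) →L[ℂ] 𝓢(ℝ, ℂ) :=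
  smulLeftCLM ℂ (fun x : ℝ => Complex.exp (-Complex.I * a * x ^ 2))

lemma MM_apply (a : ℝ) (f : 𝓢(ℝ, ℂ)) (x : ℝ) :
    MM a f x = Complex.exp (-Complex.I * a * x ^ 2) * f x := by
  rw [MM, smulLeftCLM_apply_apply (chirp_temperate a)]; simp

lemma Mop_coe (a : ℝ) (f : 𝓢(ℝ, ℂ)) : Mop a f = MM a f := by
  ext x; rw [MM_apply, Mop]

/-- The Fourier multiplier `P(a)` on the Schwartz space. Mathlib's transform has the kernel
`e^{-2πixξ}`, so frequencies are rescaled by `2π` and the chirp parameter becomes `4π²a`. -/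
def PP (a : ℝ) : 𝓢(ℝ, ℂ) →ₗ[ℂ] 𝓢(ℝ, ℂ) where
  toFun f := 𝓕⁻ (MM (4 * Real.pi ^ 2 * a) (𝓕 f))
  map_add' f g := by simp [FourierTransform.fourier_add, FourierTransform.fourierInv_add]
  map_smul' c f := by simp [FourierTransform.fourier_smul, FourierTransform.fourierInv_smul]

lemma PP_def (a : ℝ) (f : 𝓢(ℝ, ℂ)) : PP a f = 𝓕⁻ (MM (4 * Real.pi ^ 2 * a) (𝓕 f)) := rfl

lemma fourier_PP (a : ℝ) (f : 𝓢(ℝ, ℂ)) : 𝓕 (PP a f) = MM (4 * Real.pi ^ 2 * a) (𝓕 f) := by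
  rw [PP_def, FourierTransform.fourier_fourierInv_eq]

lemma fourier_inj {f g : 𝓢(ℝ, ℂ)} (h : 𝓕 f = 𝓕 g) : f = g := by
  have h' : (𝓕⁻ (𝓕 f) : 𝓢(ℝ, ℂ)) = 𝓕⁻ (𝓕 g) := by rw [h]
  rwa [FourierTransform.fourierInv_fourier_eq, FourierTransform.fourierInv_fourier_eq] at h'

lemma fourierT_coe (f : 𝓢(ℝ, ℂ)) (ξ : ℝ) :
    fourierT f ξ = (((2 * Real.pi) ^ (-(1 : ℝ) / 2) : ℝ) : ℂ) * 𝓕 f (ξ / (2 * Real.pi)) := by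
  rw [fourierT, fourier_coe, Real.fourier_real_eq_integral_exp_smul]
  congr 2
  ext x
  rw [smul_eq_mul, mul_comm]
  congr 2
  push_cast
  have : (Real.pi : ℂ) ≠ 0 := by exact_mod_cast Real.pi_ne_zero
  field_simp

lemma Pop_coe (a : ℝ) (f : 𝓢(ℝ, ℂ)) : Pop a f = PP a f := by
  ext x
  rw [Pop, PP_def, fourierInv_coe, fourierTInv, Real.fourierInv_eq']
  set c : ℂ := (((2 * Real.pi) ^ (-(1 : ℝ) / 2) : ℝ) : ℂ) with hc
  have hcc : c * c = ((2 * Real.pi)⁻¹ : ℝ) := by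
    rw [hc, ← Complex.ofReal_mul, ← Real.rpow_add (by positivity)]
    norm_num [Real.rpow_neg_one]
  have key := MeasureTheory.Measure.integral_comp_div
    (fun η : ℝ => Complex.exp (-Complex.I * (4 * Real.pi ^ 2 * a : ℝ) * η ^ 2) * 𝓕 f η
      * Complex.exp (2 * Real.pi * Complex.I * η * x)) (2 * Real.pi)
  have hpi : (Real.pi : ℂ) ≠ 0 := by exact_mod_cast Real.pi_ne_zero
  have h1 : ∀ ξ : ℝ, Complex.exp (-Complex.I * a * ξ ^ 2) * fourierT f ξ *
      Complex.exp (Complex.I * ξ * x) = c * (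
       Complex.exp (-Complex.I * (4 * Real.pi ^ 2 * a : ℝ) * ((ξ / (2 * Real.pi) : ℝ) : ℂ) ^ 2) *
        𝓕 f (ξ / (2 * Real.pi))
      * Complex.exp (2 * Real.pi * Complex.I * (ξ / (2 * Real.pi) : ℝ) * x)) := by
    intro ξ
    rw [fourierT_coe]
    have e1 : -Complex.I * (4 * Real.pi ^ 2 * a : ℝ) * ((ξ / (2 * Real.pi) : ℝ) : ℂ) ^ 2
       = -Complex.I * a * ξ ^ 2 := by push_cast; field_simp; ring
    have e2 : 2 * Real.pi * Complex.I * (ξ / (2 * Real.pi) : ℝ) * x = Complex.I * ξ * x := by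
      push_cast; field_simp
    rw [e1, e2]; ring
  simp_rw [h1]
  rw [MeasureTheory.integral_const_mul, key, ← mul_assoc, hcc, abs_of_pos (by positivity),
    ← Complex.coe_smul, smul_eq_mul, ← mul_assoc, ← Complex.ofReal_mul,
    inv_mul_cancel₀ (by positivity), Complex.ofReal_one, one_mul]
  congr 1; ext η
  rw [MM_apply, smul_eq_mul, mul_comm]
  congr 2
  simp only [RCLike.inner_apply, conj_trivial]; push_cast; ring

/-! ### Commutation relations -/

lemma XX_MM (a : ℝ) (f : 𝓢(ℝ, ℂ)) : MM a (XX f) = XX (MM a f) := by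
  ext x; simp only [MM_apply, XX_apply]; ring

lemma MM_DD (a : ℝ) (f : 𝓢(ℝ, ℂ)) :
    MM a (DD f) = DD (MM a f) + (2 * Complex.I * a) • XX (MM a f) := by
  ext x
  have h0 : (MM a f : ℝ → ℂ) = fun x : ℝ => Complex.exp (-Complex.I * a * x ^ 2) * f x := by
    ext x; exact MM_apply a f x
  have h1 : HasDerivAt (fun x : ℝ => Complex.exp (-Complex.I * a * x ^ 2))
      (Complex.exp (-Complex.I * a * x ^ 2) * (-Complex.I * a * (2 * x))) x := by
    have h2 : HasDerivAt (fun z : ℂ => Complex.exp (-Complex.I * a * z ^ 2))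
        (Complex.exp (-Complex.I * a * (x : ℂ) ^ 2) * (-Complex.I * a * (2 * (x : ℂ)))) (x : ℂ) := by
      have h3 := (((hasDerivAt_pow 2 (x : ℂ)).const_mul (-Complex.I * a))).cexp
      simpa using h3
    exact h2.comp_ofReal
  rw [MM_apply, DD_apply, add_apply, DD_apply, smul_apply, XX_apply, h0,
    (h1.fun_mul (f.hasDerivAt x)).deriv]
  simp only [smul_eq_mul]
  ring

lemma DD_fourier (f : 𝓢(ℝ, ℂ)) : DD (𝓕 f) = (-(2 * Real.pi * Complex.I)) • 𝓕 (XX f) := by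
  have h := lineDerivOp_fourier_eq f (1 : ℝ)
  have h2 : smulLeftCLM ℂ (fun x : ℝ => inner ℝ x (1:ℝ)) f = XX f := by
    ext x
    rw [smulLeftCLM_apply_apply (by fun_prop), XX_apply]; simp
  rw [h2, FourierTransform.fourier_smul] at h
  rw [← h]
  ext x
  rw [DD_apply, lineDerivOp_apply_eq_fderiv]; simp

lemma fourier_DD (f : 𝓢(ℝ, ℂ)) : 𝓕 (DD f) = (2 * Real.pi * Complex.I) • XX (𝓕 f) := by
  have h := fourier_lineDerivOp_eq f (1 : ℝ)
  have h2 : smulLeftCLM ℂ (fun x : ℝ => inner ℝ x (1:ℝ)) (𝓕 f) = XX (𝓕 f) := by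
    ext x
    rw [smulLeftCLM_apply_apply (by fun_prop), XX_apply]; simp
  rw [h2] at h
  rw [← h]
  congr 1

lemma PP_DD (b : ℝ) (f : 𝓢(ℝ, ℂ)) : PP b (DD f) = DD (PP b f) := by
  apply fourier_inj
  rw [fourier_PP, fourier_DD, fourier_DD, fourier_PP, map_smul, XX_MM]

lemma fourier_XX (f : 𝓢(ℝ, ℂ)) : 𝓕 (XX f) = (Complex.I / (2 * Real.pi)) • DD (𝓕 f) := by
  have hpi : (Real.pi : ℂ) ≠ 0 := by exact_mod_cast Real.pi_ne_zero
  rw [DD_fourier, smul_smul]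
  have : (Complex.I / (2 * Real.pi)) * (-(2 * Real.pi * Complex.I)) = 1 := by
    field_simp; simp
  rw [this, one_smul]

lemma PP_XX (b : ℝ) (f : 𝓢(ℝ, ℂ)) :
    PP b (XX f) = XX (PP b f) + (2 * Complex.I * b) • DD (PP b f) := by
  have hpi : (Real.pi : ℂ) ≠ 0 := by exact_mod_cast Real.pi_ne_zero
  apply fourier_inj
  rw [fourier_PP, FourierTransform.fourier_add, FourierTransform.fourier_smul, fourier_DD,
    fourier_XX, fourier_XX, fourier_PP, map_smul, MM_DD, smul_add, smul_smul, smul_smul]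
  congr 2
  push_cast
  field_simp
  ring

/-! ### The `L²` norm -/

/-- The `L²` norm of a Schwartz function. -/
def nrm (f : 𝓢(ℝ, ℂ)) : ℝ := ‖f.toLp 2 (volume : Measure ℝ)‖

lemma nrm_sq (f : 𝓢(ℝ, ℂ)) : nrm f ^ 2 = ∫ x, ‖f x‖ ^ 2 := by
  have h := inner_toL2_toL2_eq f f (volume : Measure ℝ)
  rw [inner_self_eq_norm_sq_to_K] at h
  have h2 : ∀ x, inner ℂ (f x) (f x) = ((‖f x‖ ^ 2 : ℝ) : ℂ) := by
    intro x; rw [inner_self_eq_norm_sq_to_K]; simp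
  simp_rw [h2] at h
  rw [integral_complex_ofReal] at h
  rw [nrm]
  exact Complex.ofReal_injective (by simpa using h)

lemma nrm_nonneg (f : 𝓢(ℝ, ℂ)) : 0 ≤ nrm f := norm_nonneg _

lemma l2norm_coe (f : 𝓢(ℝ, ℂ)) : l2norm f = nrm f := by
  rw [l2norm]
  simp_rw [Complex.normSq_eq_norm_sq]
  rw [← nrm_sq, Real.sqrt_sq (nrm_nonneg f)]

lemma nrm_add_le (f g : 𝓢(ℝ, ℂ)) : nrm (f + g) ≤ nrm f + nrm g := by
  have : (f + g).toLp 2 (volume : Measure ℝ) = f.toLp 2 (volume : Measure ℝ) +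
      g.toLp 2 (volume : Measure ℝ) :=
    map_add (toLpCLM ℂ ℂ 2 (volume : Measure ℝ)) f g
  rw [nrm, this]; exact norm_add_le _ _

lemma nrm_smul (c : ℂ) (f : 𝓢(ℝ, ℂ)) : nrm (c • f) = ‖c‖ * nrm f := by
  have : (c • f).toLp 2 (volume : Measure ℝ) = c • f.toLp 2 (volume : Measure ℝ) :=
    map_smul (toLpCLM ℂ ℂ 2 (volume : Measure ℝ)) c f
  rw [nrm, this]; exact norm_smul _ _

lemma nrm_neg (f : 𝓢(ℝ, ℂ)) : nrm (-f) = nrm f := by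
  have := nrm_smul (-1) f
  simpa using this

lemma nrm_sub_le (f g : 𝓢(ℝ, ℂ)) : nrm (f - g) ≤ nrm f + nrm g := by
  rw [sub_eq_add_neg, ← nrm_neg g]; exact nrm_add_le _ _

lemma nrm_le_of_le {f g : 𝓢(ℝ, ℂ)} (c : ℝ) (hc : 0 ≤ c) (h : ∀ x, ‖f x‖ ≤ c * ‖g x‖) :
    nrm f ≤ c * nrm g := by
  have hm : ∀ f : 𝓢(ℝ, ℂ), Integrable (fun x => ‖f x‖ ^ 2) := fun f => by
    have := (f.memLp 2 (volume : Measure ℝ)).integrable_norm_pow (by norm_num)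
    simpa using this
  refine le_of_sq_le_sq ?_ (mul_nonneg hc (nrm_nonneg g))
  rw [mul_pow, nrm_sq, nrm_sq, ← integral_const_mul]
  refine integral_mono (hm f) ((hm g).const_mul _) fun x => ?_
  have := pow_le_pow_left₀ (norm_nonneg _) (h x) 2
  simpa [mul_pow] using this

lemma norm_chirp (a x : ℝ) : ‖Complex.exp (-Complex.I * a * x ^ 2)‖ = 1 := by
  have : -Complex.I * a * x ^ 2 = ((-a * x ^ 2 : ℝ) : ℂ) * Complex.I := by push_cast; ring
  rw [this, Complex.norm_exp_ofReal_mul_I]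

lemma nrm_MM (a : ℝ) (f : 𝓢(ℝ, ℂ)) : nrm (MM a f) = nrm f := by
  have h : nrm (MM a f) ^ 2 = nrm f ^ 2 := by
    simp_rw [nrm_sq, MM_apply, norm_mul, norm_chirp, one_mul]
  exact (sq_eq_sq₀ (nrm_nonneg _) (nrm_nonneg _)).1 h

lemma nrm_fourier (f : 𝓢(ℝ, ℂ)) : nrm (𝓕 f) = nrm f := norm_fourier_toL2_eq f

lemma nrm_PP (a : ℝ) (f : 𝓢(ℝ, ℂ)) : nrm (PP a f) = nrm f := by
  rw [← nrm_fourier, fourier_PP, nrm_MM, nrm_fourier]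

lemma nrm_MM_sub_le (a : ℝ) (f : 𝓢(ℝ, ℂ)) : nrm (MM a f - f) ≤ |a| * nrm (XX (XX f)) := by
  refine nrm_le_of_le _ (abs_nonneg a) fun x => ?_
  rw [sub_apply, MM_apply, XX_apply, XX_apply, ← sub_one_mul, norm_mul, norm_mul, norm_mul,
    ← mul_assoc, ← mul_assoc]
  refine mul_le_mul_of_nonneg_right ?_ (norm_nonneg _)
  have : -Complex.I * a * x ^ 2 = Complex.I * ((-a * x ^ 2 : ℝ) : ℂ) := by push_cast; ring
  rw [this]
  refine (Real.norm_exp_I_mul_ofReal_sub_one_le).trans ?_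
  simp [mul_assoc, pow_two]

lemma fourier_sub' (f g : 𝓢(ℝ, ℂ)) : 𝓕 (f - g) = 𝓕 f - 𝓕 g :=
  map_sub (FourierTransform.fourierEquiv ℂ 𝓢(ℝ, ℂ) (F := 𝓢(ℝ, ℂ))) f g

lemma nrm_PP_sub_le (b : ℝ) (f : 𝓢(ℝ, ℂ)) : nrm (PP b f - f) ≤ |b| * nrm (DD (DD f)) := by
  have hpi : (Real.pi : ℂ) ≠ 0 := by exact_mod_cast Real.pi_ne_zero
  rw [← nrm_fourier, ← nrm_fourier (DD _), fourier_sub', fourier_PP, fourier_DD,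
    fourier_DD]
  refine (nrm_MM_sub_le _ _).trans (le_of_eq ?_)
  rw [map_smul, smul_smul, nrm_smul]
  simp [abs_mul, abs_of_pos Real.pi_pos]
  ring

lemma MM_add (a b : ℝ) (f : 𝓢(ℝ, ℂ)) : MM (a + b) f = MM a (MM b f) := by
  ext x
  simp only [MM_apply, ← mul_assoc, ← Complex.exp_add]
  congr 2; push_cast; ring

lemma PP_add (a b : ℝ) (f : 𝓢(ℝ, ℂ)) : PP (a + b) f = PP a (PP b f) := by
  apply fourier_inj
  rw [fourier_PP, fourier_PP, fourier_PP, ← MM_add]; congr 1; ring_nf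

/-! ### Gaussians -/

lemma fourier_gauss (f : 𝓢(ℝ, ℂ)) (c b : ℂ) (hb : 0 < b.re)
    (hf : ∀ x : ℝ, f x = c * Complex.exp (-Real.pi * b * x ^ 2)) (t : ℝ) :
    𝓕 f t = c * (1 / b ^ (1 / 2 : ℂ)) * Complex.exp (-Real.pi * (1 / b) * t ^ 2) := by
  have : (f : ℝ → ℂ) = c • fun x : ℝ => Complex.exp (-Real.pi * b * x ^ 2) := by
    ext x; rw [hf]; rfl
  have h2 := congrFun (fourier_gaussian_pi hb) t
  have h3 : 𝓕 (c • fun x : ℝ => Complex.exp (-Real.pi * b * x ^ 2)) =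
      c • 𝓕 (fun x : ℝ => Complex.exp (-Real.pi * b * x ^ 2)) :=
    VectorFourier.fourierIntegral_const_smul _ _ _ _ _
  rw [fourier_coe, this, h3, Pi.smul_apply, h2, smul_eq_mul, ← mul_assoc]
  congr 2; ring

lemma inv_re_pos {b : ℂ} (hb : 0 < b.re) : 0 < (1 / b).re := by
  have : b ≠ 0 := by contrapose! hb; simp [hb]
  rw [one_div, Complex.inv_re]
  exact div_pos hb (Complex.normSq_pos.2 this)

lemma sqrt_sq (b : ℂ) : (b ^ (1 / 2 : ℂ)) ^ 2 = b := by
  rw [← Complex.cpow_nat_mul]; norm_num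

/-- Free propagation maps a Gaussian of complex width `τ` to one of width `τ'`. The prefactor `κ` is
pinned only through its square, so the branch of the square root need not be tracked. -/
lemma PP_gauss (β : ℝ) (τ : ℂ) (hτ : 0 < τ.re) : ∃ κ τ' : ℂ, 0 < τ'.re ∧
    κ ^ 2 * (1 + 2 * Complex.I * β * τ) = 1 ∧ κ ^ 2 * τ = τ' ∧
    ∀ (f : 𝓢(ℝ, ℂ)) (c : ℂ), (∀ x : ℝ, f x = c * Complex.exp (-τ * x ^ 2 / 2)) →
      ∀ x : ℝ, PP β f x = κ * c * Complex.exp (-τ' * x ^ 2 / 2) := by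
  have hpi : (Real.pi : ℂ) ≠ 0 := by exact_mod_cast Real.pi_ne_zero
  have hτ0 : τ ≠ 0 := by contrapose! hτ; simp [hτ]
  set b : ℂ := τ / (2 * Real.pi) with hb
  have hbre : 0 < b.re := by
    have : b = τ * ((1 / (2 * Real.pi) : ℝ) : ℂ) := by rw [hb]; push_cast; ring
    rw [this, Complex.re_mul_ofReal]; positivity
  have hb0 : b ≠ 0 := by contrapose! hbre; simp [hbre]
  set d : ℂ := 1 / b + 4 * Real.pi * Complex.I * β with hd
  have hdre : 0 < d.re := by
    have h1 := inv_re_pos hbre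
    have h2 : (4 * Real.pi * Complex.I * β : ℂ).re = 0 := by simp
    rw [hd, Complex.add_re, h2]; simpa using h1
  have hd0 : d ≠ 0 := by contrapose! hdre; simp [hdre]
  have hbd : b * d = 1 + 2 * Complex.I * β * τ := by
    rw [hd, mul_add, mul_one_div_cancel hb0, hb]; field_simp; ring
  refine ⟨(1 / d ^ (1 / 2 : ℂ)) * (1 / b ^ (1 / 2 : ℂ)), 2 * Real.pi * (1 / d), ?_, ?_, ?_, ?_⟩
  · have h1 := inv_re_pos hdre
    have : (2 * Real.pi * (1 / d) : ℂ) = (1 / d) * ((2 * Real.pi : ℝ) : ℂ) := by push_cast; ring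
    rw [this, Complex.re_mul_ofReal]; positivity
  · rw [mul_pow, div_pow, div_pow, sqrt_sq, sqrt_sq, ← hbd]; field_simp
  · rw [mul_pow, div_pow, div_pow, sqrt_sq, sqrt_sq]
    have : τ = 2 * Real.pi * b := by rw [hb]; field_simp
    rw [this]; field_simp
  · intro f c hf x
    have h1 := fourier_gauss f c b hbre (fun x => by
      rw [hf]; congr 2; rw [hb]; field_simp)
    set g := MM (4 * Real.pi ^ 2 * β) (𝓕 f) with hg
    have h2 : ∀ t : ℝ, g t = (c * (1 / b ^ (1 / 2 : ℂ))) * Complex.exp (-Real.pi * d * t ^ 2) := by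
      intro t
      rw [hg, MM_apply, h1, mul_left_comm, ← Complex.exp_add]
      congr 2; rw [hd]; push_cast; ring
    have h3 := fourier_gauss g _ d hdre h2 (-x)
    have h4 : PP β f x = 𝓕 g (-x) := by
      rw [PP_def, ← hg, fourierInv_coe, fourier_coe, Real.fourierInv_eq_fourier_neg]
    rw [h4, h3]
    have : -Real.pi * (1 / d) * ((-x : ℝ) : ℂ) ^ 2 = -(2 * Real.pi * (1 / d)) * (x : ℂ) ^ 2 / 2 := by
      push_cast; ring
    rw [this]; ring

lemma MM_gauss (a : ℝ) (τ : ℂ) (f : 𝓢(ℝ, ℂ)) (c : ℂ)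
    (hf : ∀ x : ℝ, f x = c * Complex.exp (-τ * x ^ 2 / 2)) (x : ℝ) :
    MM a f x = c * Complex.exp (-(τ + 2 * Complex.I * a) * x ^ 2 / 2) := by
  rw [MM_apply, hf, mul_left_comm, ← Complex.exp_add]
  congr 2; ring

/-! ### The Hermite functions and the ladder operators -/

lemma abs_pow_mul_gauss_le (m : ℕ) (x : ℝ) :
    |x| ^ m * Real.exp (-x ^ 2 / 2) ≤ 1 + m.factorial := by
  set t := |x| ^ m * Real.exp (-x ^ 2 / 2) with ht
  have h1 : t ^ 2 = (x ^ 2) ^ m * Real.exp (-x ^ 2) := by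
    rw [ht, mul_pow, ← Real.exp_nat_mul, ← pow_mul, mul_comm m 2, pow_mul, sq_abs]
    congr 2; push_cast; ring
  have h2 := Real.pow_div_factorial_le_exp (x ^ 2) (sq_nonneg x) m
  have h3 : t ^ 2 ≤ m.factorial := by
    rw [h1, Real.exp_neg, ← div_eq_mul_inv, div_le_iff₀ (Real.exp_pos _)]
    rw [div_le_iff₀ (by positivity)] at h2
    linarith
  nlinarith [sq_nonneg (t - 1)]

lemma poly_mul_gauss_bdd (q : Polynomial ℝ) :
    ∃ C : ℝ, ∀ x : ℝ, |q.eval x * Real.exp (-x ^ 2 / 2)| ≤ C := by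
  induction q using Polynomial.induction_on' with
  | add p q hp hq =>
    obtain ⟨C, hC⟩ := hp
    obtain ⟨D, hD⟩ := hq
    refine ⟨C + D, fun x => ?_⟩
    rw [Polynomial.eval_add, add_mul]
    exact (abs_add_le _ _).trans (add_le_add (hC x) (hD x))
  | monomial m a =>
    refine ⟨|a| * (1 + m.factorial), fun x => ?_⟩
    rw [Polynomial.eval_monomial, mul_assoc, abs_mul, abs_mul, abs_pow,
      abs_of_pos (Real.exp_pos _)]
    exact mul_le_mul_of_nonneg_left (abs_pow_mul_gauss_le m x) (abs_nonneg a)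

lemma hasDerivAt_gauss (x : ℝ) :
    HasDerivAt (fun x : ℝ => Real.exp (-x ^ 2 / 2)) (Real.exp (-x ^ 2 / 2) * (-x)) x := by
  have h : HasDerivAt (fun x : ℝ => -x ^ 2 / 2) (-x) x := by
    have := ((hasDerivAt_pow 2 x).fun_neg).div_const 2
    refine this.congr_deriv ?_
    norm_num
    ring
  exact h.exp

lemma iteratedDeriv_gauss (n : ℕ) : ∃ q : Polynomial ℝ,
    iteratedDeriv n (fun x : ℝ => Real.exp (-x ^ 2 / 2)) =
      fun x => q.eval x * Real.exp (-x ^ 2 / 2) := by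
  induction n with
  | zero => exact ⟨1, by simp⟩
  | succ n ih =>
    obtain ⟨q, hq⟩ := ih
    refine ⟨Polynomial.derivative q - Polynomial.X * q, ?_⟩
    rw [iteratedDeriv_succ, hq]
    ext x
    have h1 := hasDerivAt_gauss x
    rw [((q.hasDerivAt x).fun_mul h1).deriv]
    simp; ring

/-- The Gaussian `e^{-x²/2}` as a real Schwartz function. -/
def gaussR : 𝓢(ℝ, ℝ) where
  toFun x := Real.exp (-x ^ 2 / 2)
  smooth' := by fun_prop
  decay' k n := by
    obtain ⟨q, hq⟩ := iteratedDeriv_gauss n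
    obtain ⟨C, hC⟩ := poly_mul_gauss_bdd (Polynomial.X ^ k * q)
    refine ⟨C, fun x => ?_⟩
    rw [norm_iteratedFDeriv_eq_norm_iteratedDeriv, hq]
    have := hC x
    simpa [abs_mul, mul_assoc] using this

/-- The unnormalised ground state `e^{-x²/2}`. -/
def gauss : 𝓢(ℝ, ℂ) := postcompCLM Complex.ofRealCLM gaussR

lemma gauss_apply (x : ℝ) : gauss x = ((Real.exp (-x ^ 2 / 2) : ℝ) : ℂ) := rfl

/-- The creation operator `x - d/dx`. -/
def AA (f : 𝓢(ℝ, ℂ)) : 𝓢(ℝ, ℂ) := XX f - DD f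

/-- The annihilation operator `x + d/dx`. -/
def BB (f : 𝓢(ℝ, ℂ)) : 𝓢(ℝ, ℂ) := XX f + DD f

lemma AA_smul (c : ℂ) (f : 𝓢(ℝ, ℂ)) : AA (c • f) = c • AA f := by
  simp only [AA, map_smul, smul_sub]

lemma DD_XX (f : 𝓢(ℝ, ℂ)) : DD (XX f) = f + XX (DD f) := by
  ext x
  have h0 : (XX f : ℝ → ℂ) = fun x : ℝ => (x : ℂ) * f x := by ext x; exact XX_apply f x
  have h3 : HasDerivAt (fun y : ℝ => (y : ℂ)) 1 x := (hasDerivAt_id (x : ℂ)).comp_ofReal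
  rw [DD_apply, h0, (h3.fun_mul (f.hasDerivAt x)).deriv, add_apply, XX_apply, DD_apply, one_mul]

lemma BB_AA (f : 𝓢(ℝ, ℂ)) : BB (AA f) = AA (BB f) + (2 : ℂ) • f := by
  simp only [AA, BB, map_add, map_sub, DD_XX]
  module

/-- Unnormalised Hermite functions, obtained from the Gaussian by the creation operator. -/
def herm : ℕ → 𝓢(ℝ, ℂ)
  | 0 => gauss
  | n + 1 => AA (herm n)

lemma BB_gauss : BB gauss = 0 := by
  ext x
  have h1 := hasDerivAt_gauss x
  have h2 : deriv gauss x = ((Real.exp (-x ^ 2 / 2) * (-x) : ℝ) : ℂ) := h1.ofReal_comp.deriv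
  rw [BB, add_apply, XX_apply, DD_apply, h2, gauss_apply]
  push_cast; simp; ring

lemma BB_herm_succ (n : ℕ) : BB (herm (n + 1)) = (2 * (n + 1) : ℂ) • herm n := by
  induction n with
  | zero =>
    simp only [herm, BB_AA, BB_gauss]
    have : AA 0 = 0 := by simp [AA]
    rw [this]; simp
  | succ n ih =>
    rw [herm, BB_AA, ih, AA_smul, ← herm, ← add_smul]
    congr 1; push_cast; ring

lemma BB_AA_herm (n : ℕ) : BB (AA (herm n)) = (2 * (n + 1) : ℂ) • herm n := BB_herm_succ n

lemma AA_BB_herm (n : ℕ) : AA (BB (herm n)) = (2 * n : ℂ) • herm n := by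
  have h := BB_AA (herm n)
  rw [BB_AA_herm] at h
  have h2 : AA (BB (herm n)) = (2 * (n + 1) : ℂ) • herm n - (2 : ℂ) • herm n := by rw [h]; abel
  rw [h2, ← sub_smul]; congr 1; ring

/-- The real part of the `L²` inner product. -/
def ip (f g : 𝓢(ℝ, ℂ)) : ℝ := ∫ x, inner ℝ (f x) (g x)

lemma ip_integrable (f g : 𝓢(ℝ, ℂ)) : Integrable (fun x => inner ℝ (f x) (g x)) :=
  (pairing (innerSL ℝ) f g).integrable

lemma ip_self (f : 𝓢(ℝ, ℂ)) : ip f f = nrm f ^ 2 := by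
  rw [nrm_sq, ip]; simp only [real_inner_self_eq_norm_sq]

lemma ip_add (f g h : 𝓢(ℝ, ℂ)) : ip f (g + h) = ip f g + ip f h := by
  simp only [ip, add_apply, inner_add_right]
  exact integral_add (ip_integrable f g) (ip_integrable f h)

lemma ip_sub_left (f g h : 𝓢(ℝ, ℂ)) : ip (f - g) h = ip f h - ip g h := by
  simp only [ip, sub_apply, inner_sub_left]
  exact integral_sub (ip_integrable f h) (ip_integrable g h)

lemma ip_smul (c : ℝ) (f g : 𝓢(ℝ, ℂ)) : ip f ((c : ℂ) • g) = c * ip f g := by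
  simp only [ip, smul_apply, Complex.coe_smul, inner_smul_right]
  exact integral_const_mul _ _

lemma ip_XX (f g : 𝓢(ℝ, ℂ)) : ip (XX f) g = ip f (XX g) := by
  rw [ip, ip]
  refine integral_congr_ae (ae_of_all _ fun x => ?_)
  beta_reduce
  rw [XX_apply, XX_apply, ← Complex.real_smul, ← Complex.real_smul, real_inner_smul_left, real_inner_smul_right]

lemma ip_DD (f g : 𝓢(ℝ, ℂ)) : ip (DD f) g = - ip f (DD g) := by
  have : ∫ x, inner ℝ (f x) (deriv g x) = -∫ x, inner ℝ (deriv f x) (g x) :=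
    integral_bilinear_deriv_right_eq_neg_left f g (innerSL ℝ)
  simp only [ip, DD_apply, this, neg_neg]

lemma ip_AA (f g : 𝓢(ℝ, ℂ)) : ip (AA f) g = ip f (BB g) := by
  rw [AA, BB, ip_sub_left, ip_add, ip_XX, ip_DD, sub_neg_eq_add]

lemma nrm_AA_sq (f : 𝓢(ℝ, ℂ)) : nrm (AA f) ^ 2 = ip f (BB (AA f)) := by
  rw [← ip_self, ip_AA]

lemma nrm_BB_le (f : 𝓢(ℝ, ℂ)) : nrm (BB f) ≤ nrm (AA f) := by
  refine le_of_sq_le_sq ?_ (nrm_nonneg _)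
  have h1 : ip f (AA (BB f)) = nrm (BB f) ^ 2 := by
    have hs : ∀ f g, ip f g = ip g f := fun f g => by simp only [ip, real_inner_comm]
    rw [hs, ip_AA, ip_self]
  rw [nrm_AA_sq, BB_AA, ip_add, h1]
  have h2 := ip_smul 2 f f
  push_cast at h2
  rw [h2, ip_self]
  nlinarith [sq_nonneg (nrm f)]

lemma nrm_herm_succ_sq (n : ℕ) : nrm (herm (n + 1)) ^ 2 = (2 * (n + 1)) * nrm (herm n) ^ 2 := by
  rw [herm, nrm_AA_sq, BB_AA_herm]
  have := ip_smul (2 * (n + 1)) (herm n) (herm n)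
  push_cast at this
  rw [this, ip_self]

lemma nrm_gauss_sq : nrm gauss ^ 2 = Real.sqrt Real.pi := by
  rw [nrm_sq]
  have := integral_gaussian 1
  rw [div_one] at this
  rw [← this]
  congr 1; ext x
  rw [gauss_apply, Complex.norm_real, Real.norm_eq_abs, sq_abs, ← Real.exp_nat_mul]
  congr 1; push_cast; ring

lemma nrm_herm_sq (n : ℕ) :
    nrm (herm n) ^ 2 = 2 ^ n * n.factorial * Real.sqrt Real.pi := by
  induction n with
  | zero => rw [herm, nrm_gauss_sq]; simp
  | succ n ih => rw [nrm_herm_succ_sq, ih, Nat.factorial_succ]; push_cast; ring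

lemma nrm_herm_pos (n : ℕ) : 0 < nrm (herm n) := by
  have : 0 < nrm (herm n) ^ 2 := by
    rw [nrm_herm_sq]; have := Real.pi_pos; positivity
  exact lt_of_le_of_ne (nrm_nonneg _) fun h => by rw [← h] at this; simp at this

lemma nrm_gauss_pos : 0 < nrm gauss := nrm_herm_pos 0

/-- Rodrigues' formula for the unnormalised Hermite functions. -/
lemma herm_apply (n : ℕ) (x : ℝ) :
    herm n x = ((Real.exp (-x ^ 2 / 2) * hermiteH n x : ℝ) : ℂ) := by
  have key : ∀ (n : ℕ) (x : ℝ), Real.exp (-x ^ 2 / 2) * hermiteH n x =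
      (-1) ^ n * Real.exp (x ^ 2 / 2) * iteratedDeriv n (fun y => Real.exp (-y ^ 2)) x := by
    intro n x
    have : Real.exp (-x ^ 2 / 2) * Real.exp (x ^ 2) = Real.exp (x ^ 2 / 2) := by
      rw [← Real.exp_add]; congr 1; ring
    rw [hermiteH, ← this]; ring
  have hsm : ContDiff ℝ ⊤ (fun y : ℝ => Real.exp (-y ^ 2)) := by fun_prop
  induction n generalizing x with
  | zero => simp [herm, gauss_apply, hermiteH, ← Real.exp_add]
  | succ n ih =>
    have h0 : (herm n : ℝ → ℂ) = fun x => (((-1) ^ n * Real.exp (x ^ 2 / 2) *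
        iteratedDeriv n (fun y => Real.exp (-y ^ 2)) x : ℝ) : ℂ) := by
      ext x; rw [ih, key]
    have h1 : HasDerivAt (fun x : ℝ => Real.exp (x ^ 2 / 2)) (Real.exp (x ^ 2 / 2) * x) x := by
      have := ((hasDerivAt_pow 2 x).div_const 2).exp
      convert this using 2
      simp
    have h2 : HasDerivAt (iteratedDeriv n (fun y : ℝ => Real.exp (-y ^ 2)))
        (iteratedDeriv (n + 1) (fun y : ℝ => Real.exp (-y ^ 2)) x) x := by
      rw [iteratedDeriv_succ]
      exact ((hsm.differentiable_iteratedDeriv n (by simp)) x).hasDerivAt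
    have h3 := ((h1.const_mul ((-1) ^ n)).fun_mul h2).ofReal_comp.deriv
    rw [← h0] at h3
    rw [herm, AA, sub_apply, XX_apply, DD_apply, h3, h0, key]
    push_cast; ring

/-- The normalising constant of the `n`-th Hermite function. -/
def hermC (n : ℕ) : ℝ := 1 / Real.sqrt (2 ^ n * n.factorial * Real.sqrt Real.pi)

lemma hermiteFnC_eq (n : ℕ) : hermiteFnC n = ((hermC n : ℂ) • herm n : 𝓢(ℝ, ℂ)) := by
  ext x
  rw [smul_apply, herm_apply, hermiteFnC, hermiteFn, hermC, smul_eq_mul]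
  push_cast; ring

/-- The Hermite functions are normalised. -/
lemma hermC_mul (n : ℕ) : ‖(hermC n : ℂ)‖ * nrm (herm n) = 1 := by
  have h := nrm_herm_pos n
  rw [Complex.norm_real, hermC, ← nrm_herm_sq, Real.sqrt_sq h.le, Real.norm_eq_abs,
    abs_of_pos (by positivity), one_div_mul_cancel h.ne']

lemma nrm_AAAA (n : ℕ) : nrm (AA (AA (herm n))) ≤ (2 * n + 4) * nrm (herm n) := by
  have h1 : nrm (AA (AA (herm n))) ^ 2 = _ := nrm_herm_succ_sq (n + 1)
  rw [nrm_herm_succ_sq] at h1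
  refine le_of_sq_le_sq ?_ (mul_nonneg (by positivity) (nrm_nonneg _))
  rw [h1, mul_pow, ← mul_assoc]
  refine mul_le_mul_of_nonneg_right ?_ (sq_nonneg _)
  push_cast; nlinarith

lemma nrm_BBAA (n : ℕ) : nrm (BB (AA (herm n))) ≤ (2 * n + 4) * nrm (herm n) := by
  have : ‖(2 * (n + 1) : ℂ)‖ = 2 * (n + 1) := by
    have : (2 * (n + 1) : ℂ) = ((2 * (n + 1) : ℝ) : ℂ) := by push_cast; ring
    rw [this, Complex.norm_real, Real.norm_eq_abs, abs_of_pos (by positivity)]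
  rw [BB_AA_herm, nrm_smul, this]
  exact mul_le_mul_of_nonneg_right (by linarith) (nrm_nonneg _)

lemma nrm_AABB (n : ℕ) : nrm (AA (BB (herm n))) ≤ (2 * n + 4) * nrm (herm n) := by
  rw [AA_BB_herm, nrm_smul]
  refine mul_le_mul_of_nonneg_right ?_ (nrm_nonneg _)
  simp

lemma nrm_quarter_le (f g h k : 𝓢(ℝ, ℂ)) (c : ℝ) (hf : nrm f ≤ c) (hg : nrm g ≤ c)
    (hh : nrm h ≤ c) (hk : nrm k ≤ c) (F : 𝓢(ℝ, ℂ)) (e₁ e₂ e₃ : ℂ) (h1 : ‖e₁‖ = 1)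
    (h2 : ‖e₂‖ = 1) (h3 : ‖e₃‖ = 1)
    (hF : F = (1 / 4 : ℂ) • (f + e₁ • g + e₂ • h + e₃ • k)) : nrm F ≤ c := by
  have a1 := nrm_add_le (f + e₁ • g + e₂ • h) (e₃ • k)
  have a2 := nrm_add_le (f + e₁ • g) (e₂ • h)
  have a3 := nrm_add_le f (e₁ • g)
  rw [nrm_smul, h1] at a3
  rw [nrm_smul, h2] at a2
  rw [nrm_smul, h3] at a1
  have : ‖(1 / 4 : ℂ)‖ = 1 / 4 := by norm_num
  rw [hF, nrm_smul, this]
  linarith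

/-- All quadratic monomials in position and derivative grow at most linearly in `n` on the Hermite
functions: they are quarter sums of products of two ladder operators. -/
lemma herm_quad (n : ℕ) : let c := (2 * n + 4) * nrm (herm n)
    nrm (XX (XX (herm n))) ≤ c ∧ nrm (XX (DD (herm n))) ≤ c ∧
    nrm (DD (XX (herm n))) ≤ c ∧ nrm (DD (DD (herm n))) ≤ c := by
  intro c
  have h1 := nrm_AAAA n
  have h2 := nrm_AABB n
  have h3 := nrm_BBAA n
  have h4 := (nrm_BB_le (BB (herm n))).trans h2
  refine ⟨?_, ?_, ?_, ?_⟩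
  · refine nrm_quarter_le _ _ _ _ c h1 h2 h3 h4 _ 1 1 1 (by simp) (by simp) (by simp) ?_
    simp only [AA, BB, map_add, map_sub]; module
  · refine nrm_quarter_le _ _ _ _ c h2 h1 h3 h4 _ (-1) (-1) 1 (by simp) (by simp) (by simp) ?_
    simp only [AA, BB, map_add, map_sub]; module
  · refine nrm_quarter_le _ _ _ _ c h3 h1 h2 h4 _ (-1) (-1) 1 (by simp) (by simp) (by simp) ?_
    simp only [AA, BB, map_add, map_sub]; module
  · refine nrm_quarter_le _ _ _ _ c h1 h2 h3 h4 _ (-1) (-1) 1 (by simp) (by simp) (by simp) ?_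
    simp only [AA, BB, map_add, map_sub]; module

/-! ### Quadratic propagators and their symplectic matrices -/

/-- The operator `i d/dx`, so that the creation operator is `XX + i YY`. With it, quadratic
propagators act on `(XX, YY)` through real matrices. -/
def YY (f : 𝓢(ℝ, ℂ)) : 𝓢(ℝ, ℂ) := Complex.I • DD f

/-- Endomorphisms of the Schwartz space. -/
abbrev Op := 𝓢(ℝ, ℂ) →ₗ[ℂ] 𝓢(ℝ, ℂ)

/-- `T` implements the real `2 × 2` matrix `S`: conjugation by `T` acts on `(x, i d/dx)` through `S`,
`T` maps Gaussians to Gaussians by the Möbius transformation of `S` (with `τ` the width and `κ` the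
change of prefactor), and `T` is isometric for the `L²` norm. -/
structure Implements (T : Op) (S : Matrix (Fin 2) (Fin 2) ℝ) : Prop where
  hX : ∀ f, T (XX f) = (S 0 0 : ℂ) • XX (T f) + (S 0 1 : ℂ) • YY (T f)
  hY : ∀ f, T (YY f) = (S 1 0 : ℂ) • XX (T f) + (S 1 1 : ℂ) • YY (T f)
  hG : ∀ τ : ℂ, 0 < τ.re → ∃ κ τ' : ℂ, 0 < τ'.re ∧
    κ ^ 2 * (S 1 1 + Complex.I * τ * S 0 1) = 1 ∧
    κ ^ 2 * (S 1 0 + Complex.I * τ * S 0 0) = Complex.I * τ' ∧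
    ∀ (f : 𝓢(ℝ, ℂ)) (c : ℂ), (∀ x : ℝ, f x = c * Complex.exp (-τ * x ^ 2 / 2)) →
      ∀ x : ℝ, T f x = κ * c * Complex.exp (-τ' * x ^ 2 / 2)
  hN : ∀ f, nrm (T f) = nrm f

/-- The chirp `M(a)` as an endomorphism. -/
def ML (a : ℝ) : Op := (MM a).toLinearMap

lemma ML_apply (a : ℝ) (f : 𝓢(ℝ, ℂ)) : ML a f = MM a f := rfl

lemma rep_ML (a : ℝ) : Implements (ML a) !![1, 0; -2 * a, 1] where
  hX f := by simp [ML_apply, XX_MM]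
  hY f := by
    simp only [ML_apply, YY, map_smul, MM_DD]
    simp only [Matrix.of_apply, Matrix.cons_val', Matrix.cons_val_zero, Matrix.cons_val_one,
      Matrix.cons_val_fin_one, smul_add, smul_smul]
    rw [add_comm]
    congr 2
    · push_cast; linear_combination 2 * (a : ℂ) * Complex.I_mul_I
    · simp
  hG τ hτ := by
    refine ⟨1, τ + 2 * Complex.I * a, ?_, by simp, ?_, fun f c hf x => ?_⟩
    · simpa using hτ
    · simp only [Matrix.of_apply, Matrix.cons_val', Matrix.cons_val_zero, Matrix.cons_val_one,
        Matrix.cons_val_fin_one]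
      push_cast; linear_combination -2 * (a : ℂ) * Complex.I_mul_I
    · rw [ML_apply, MM_gauss a τ f c hf, one_mul]
  hN f := nrm_MM a f

lemma rep_PP (b : ℝ) : Implements (PP b) !![1, 2 * b; 0, 1] where
  hX f := by
    rw [PP_XX]
    simp only [Matrix.of_apply, Matrix.cons_val', Matrix.cons_val_zero, Matrix.cons_val_one,
      Matrix.cons_val_fin_one, YY, smul_smul]
    congr 2
    · simp
    · push_cast; ring
  hY f := by simp [YY, PP_DD]
  hG τ hτ := by
    obtain ⟨κ, τ', h1, h2, h3, h4⟩ := PP_gauss b τ hτ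
    refine ⟨κ, τ', h1, ?_, ?_, h4⟩
    · rw [← h2]
      simp only [Matrix.of_apply, Matrix.cons_val', Matrix.cons_val_zero, Matrix.cons_val_one,
        Matrix.cons_val_fin_one]
      push_cast; ring
    · rw [← h3]
      simp only [Matrix.of_apply, Matrix.cons_val', Matrix.cons_val_zero, Matrix.cons_val_one,
        Matrix.cons_val_fin_one]
      push_cast; ring
  hN f := nrm_PP b f

/-- Composition reverses the order of the matrices, because the matrices record how the operators
act on coordinates. -/
lemma Implements.comp {T₁ T₂ : Op} {S₁ S₂ : Matrix (Fin 2) (Fin 2) ℝ} (h₁ : Implements T₁ S₁) (h₂ : Implements T₂ S₂) :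
    Implements (T₁ ∘ₗ T₂) (S₂ * S₁) where
  hX f := by
    simp only [LinearMap.comp_apply, h₂.hX, map_add, map_smul, h₁.hX, h₁.hY, Matrix.mul_apply,
      Fin.sum_univ_two, Complex.ofReal_add, Complex.ofReal_mul]
    module
  hY f := by
    simp only [LinearMap.comp_apply, h₂.hY, map_add, map_smul, h₁.hX, h₁.hY, Matrix.mul_apply,
      Fin.sum_univ_two, Complex.ofReal_add, Complex.ofReal_mul]
    module
  hG τ hτ := by
    obtain ⟨κ₂, τ₂, a1, a2, a3, a4⟩ := h₂.hG τ hτ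
    obtain ⟨κ₁, τ₁, b1, b2, b3, b4⟩ := h₁.hG τ₂ a1
    refine ⟨κ₁ * κ₂, τ₁, b1, ?_, ?_, fun f c hf x => ?_⟩
    · simp only [Matrix.mul_apply, Fin.sum_univ_two, Complex.ofReal_add, Complex.ofReal_mul]
      linear_combination b2 + κ₁ ^ 2 * S₁ 1 1 * a2 + κ₁ ^ 2 * S₁ 0 1 * a3
    · simp only [Matrix.mul_apply, Fin.sum_univ_two, Complex.ofReal_add, Complex.ofReal_mul]
      linear_combination b3 + κ₁ ^ 2 * S₁ 1 0 * a2 + κ₁ ^ 2 * S₁ 0 0 * a3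
    · rw [LinearMap.comp_apply, b4 (T₂ f) (κ₂ * c) (a4 f c hf) x]; ring
  hN f := by rw [LinearMap.comp_apply, h₁.hN, h₂.hN]

lemma AA_eq (f : 𝓢(ℝ, ℂ)) : AA f = XX f + Complex.I • YY f := by
  rw [AA, YY, smul_smul, Complex.I_mul_I]; module

lemma Implements.AA {T : Op} {S : Matrix (Fin 2) (Fin 2) ℝ} (h : Implements T S) (f : 𝓢(ℝ, ℂ)) :
    T (AA f) = (S 0 0 + Complex.I * S 1 0 : ℂ) • XX (T f) +
      (S 0 1 + Complex.I * S 1 1 : ℂ) • YY (T f) := by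
  rw [AA_eq, map_add, map_smul, h.hX, h.hY]; module

lemma gauss_form (x : ℝ) : gauss x = 1 * Complex.exp (-1 * x ^ 2 / 2) := by
  rw [gauss_apply]; push_cast; ring_nf

/-- The action on the ground state, up to the sign of `κ`. -/
lemma Implements.gauss {T : Op} {S : Matrix (Fin 2) (Fin 2) ℝ} (h : Implements T S) : ∃ κ τ' : ℂ,
    κ ^ 2 * (S 1 1 + Complex.I * S 0 1) = 1 ∧
    κ ^ 2 * (S 1 0 + Complex.I * S 0 0) = Complex.I * τ' ∧
    ∀ x : ℝ, T gauss x = κ * Complex.exp (-τ' * x ^ 2 / 2) := by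
  obtain ⟨κ, τ', -, h2, h3, h4⟩ := h.hG 1 (by simp)
  exact ⟨κ, τ', by simpa using h2, by simpa using h3, fun x => by
    simpa using h4 _root_.gauss 1 gauss_form x⟩

/-- Two isometries implementing the same matrix and both close to the identity on the ground state
agree on all Hermite functions. -/
lemma Implements.unique {T V : Op} {S : Matrix (Fin 2) (Fin 2) ℝ} (hT : Implements T S) (hV : Implements V S)
    (h1 : nrm (T _root_.gauss - _root_.gauss) < nrm _root_.gauss / 2)
    (h2 : nrm (V _root_.gauss - _root_.gauss) < nrm _root_.gauss / 2) (n : ℕ) :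
    T (herm n) = V (herm n) := by
  induction n with
  | zero =>
    rw [herm]
    obtain ⟨κ, τ, a1, a2, a3⟩ := hT.gauss
    obtain ⟨κ', τ', b1, b2, b3⟩ := hV.gauss
    have hne : (S 1 1 + Complex.I * S 0 1 : ℂ) ≠ 0 := fun h => by simp [h] at a1
    have hk : κ ^ 2 = κ' ^ 2 := mul_right_cancel₀ hne (a1.trans b1.symm)
    have ht : τ = τ' := by
      have : Complex.I * τ = Complex.I * τ' := by rw [← a2, ← b2, hk]
      exact mul_left_cancel₀ Complex.I_ne_zero this
    subst ht
    rcases sq_eq_sq_iff_eq_or_eq_neg.1 hk with h | h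
    · ext x; rw [a3, b3, h]
    -- opposite signs of `κ` would put the images of the ground state at distance `2 nrm gauss`
    · exfalso
      have hTV : T _root_.gauss = - V _root_.gauss := by
        ext x; rw [neg_apply, a3, b3, h, neg_mul]
      have e : (2 : ℂ) • _root_.gauss = -((T _root_.gauss - _root_.gauss) +
          (V _root_.gauss - _root_.gauss)) := by rw [hTV]; module
      have h3 := nrm_smul 2 _root_.gauss
      rw [e, nrm_neg] at h3
      have h4 := nrm_add_le (T _root_.gauss - _root_.gauss) (V _root_.gauss - _root_.gauss)
      have h5 : ‖(2 : ℂ)‖ = 2 := by norm_num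
      rw [h5] at h3
      have := nrm_gauss_pos
      linarith
  | succ n ih => rw [herm, hT.AA, hV.AA, ih]

/-- The matrix of the harmonic-oscillator flow. -/
def Rot (s : ℝ) : Matrix (Fin 2) (Fin 2) ℝ := !![Real.cos s, Real.sin s; -Real.sin s, Real.cos s]

/-- An isometry implementing the rotation by `s`, close to the identity, acts on the Hermite
functions as the propagator of the harmonic oscillator. -/
lemma Implements.rot {V : Op} {s : ℝ} (hV : Implements V (Rot s)) (hs : |s| < 1)
    (h : nrm (V _root_.gauss - _root_.gauss) < nrm _root_.gauss / 2) (n : ℕ) :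
    V (herm n) = Complex.exp (-Complex.I * s * (n + 1 / 2)) • herm n := by
  have hcs : Complex.exp (-Complex.I * s) = Complex.cos s - Complex.I * Complex.sin s := by
    have : -Complex.I * s = (-s : ℂ) * Complex.I := by ring
    rw [this, Complex.exp_mul_I, Complex.cos_neg, Complex.sin_neg]; ring
  have hsq := Complex.sin_sq_add_cos_sq (s : ℂ)
  have hI := Complex.I_mul_I
  induction n with
  | zero =>
    rw [herm]
    obtain ⟨κ, τ, a1, a2, a3⟩ := hV.gauss
    simp only [Rot, Matrix.of_apply, Matrix.cons_val', Matrix.cons_val_zero, Matrix.cons_val_one,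
      Matrix.cons_val_fin_one, Complex.ofReal_neg, Complex.ofReal_cos, Complex.ofReal_sin] at a1 a2
    have hτ : τ = 1 := by
      apply mul_left_cancel₀ Complex.I_ne_zero
      linear_combination -a2 + Complex.I * a1 - κ ^ 2 * Complex.sin s * hI
    have hκ : κ ^ 2 = Complex.exp (-Complex.I * s / 2) ^ 2 := by
      have : Complex.exp (-Complex.I * s / 2) ^ 2 = Complex.exp (-Complex.I * s) := by
        rw [← Complex.exp_nat_mul]; congr 1; push_cast; ring
      rw [this, hcs]
      linear_combination (Complex.cos s - Complex.I * Complex.sin s) * a1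
        - κ ^ 2 * hsq + κ ^ 2 * Complex.sin s ^ 2 * hI
    have hVg : V _root_.gauss = κ • _root_.gauss := by
      ext x; rw [a3, hτ, smul_apply, gauss_form, one_mul, smul_eq_mul]
    have hκ1 : ‖κ - 1‖ < 1 / 2 := by
      have e : V _root_.gauss - _root_.gauss = (κ - 1) • _root_.gauss := by rw [hVg]; module
      rw [e, nrm_smul] at h
      have := nrm_gauss_pos
      by_contra hc
      push Not at hc
      nlinarith
    have he : Complex.exp (-Complex.I * s * ((0 : ℕ) + 1 / 2)) = Complex.exp (-Complex.I * s / 2) := by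
      congr 1; push_cast; ring
    rw [hVg, he]
    congr 1
    rcases sq_eq_sq_iff_eq_or_eq_neg.1 hκ with hh | hh
    · exact hh
    · exfalso
      have h1 : ‖Complex.exp (-Complex.I * s / 2) - 1‖ ≤ |s| / 2 := by
        have : -Complex.I * s / 2 = Complex.I * ((-s / 2 : ℝ) : ℂ) := by push_cast; ring
        rw [this]
        refine (Real.norm_exp_I_mul_ofReal_sub_one_le).trans (le_of_eq ?_)
        rw [Real.norm_eq_abs, abs_div, abs_neg, abs_two]
      have h2 : (2 : ℂ) = -((κ - 1) + (Complex.exp (-Complex.I * s / 2) - 1)) := by rw [hh]; ring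
      have h3 : ‖(2 : ℂ)‖ ≤ ‖κ - 1‖ + ‖Complex.exp (-Complex.I * s / 2) - 1‖ := by
        have h6 := norm_add_le (κ - 1) (Complex.exp (-Complex.I * s / 2) - 1)
        rwa [← norm_neg (κ - 1 + _), ← h2] at h6
      have h5 : ‖(2 : ℂ)‖ = 2 := by norm_num
      linarith
  | succ n ih =>
    rw [herm, hV.AA, ih, AA_eq]
    simp only [Rot, Matrix.of_apply, Matrix.cons_val', Matrix.cons_val_zero, Matrix.cons_val_one,
      Matrix.cons_val_fin_one, Complex.ofReal_neg, Complex.ofReal_cos, Complex.ofReal_sin]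
    have e1 : Complex.exp (-Complex.I * s * ((n + 1 : ℕ) + 1 / 2)) =
        (Complex.cos s - Complex.I * Complex.sin s) * Complex.exp (-Complex.I * s * (n + 1 / 2)) := by
      rw [← hcs, ← Complex.exp_add]; congr 1; push_cast; ring
    rw [e1]
    simp only [map_smul, YY, smul_add, smul_smul]
    congr 2
    · ring
    · linear_combination (Complex.exp (-Complex.I * s * (n + 1 / 2)) *
        Complex.I * Complex.sin s) * hI

/-- The symmetric splitting `M(α) P(β) M(α)`. -/
def MPM (α β : ℝ) : Op := ML α ∘ₗ PP β ∘ₗ ML α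

lemma MPM_apply (α β : ℝ) (f : 𝓢(ℝ, ℂ)) : MPM α β f = MM α (PP β (MM α f)) := rfl

lemma rep_MPM (α β : ℝ) : Implements (MPM α β) !![1 - 4 * α * β, 2 * β;
    -4 * α + 8 * α ^ 2 * β, 1 - 4 * α * β] := by
  have h := ((rep_ML α).comp ((rep_PP β).comp (rep_ML α)))
  have e : !![1 - 4 * α * β, 2 * β; -4 * α + 8 * α ^ 2 * β, 1 - 4 * α * β] =
      !![1, 0; -2 * α, 1] * !![1, 2 * β; 0, 1] * !![1, 0; -2 * α, 1] := by
    ext i j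
    fin_cases i <;> fin_cases j <;> simp <;> ring
  rw [e]
  exact h

lemma DD_MM (a : ℝ) (f : 𝓢(ℝ, ℂ)) : DD (MM a f) = MM a (DD f - (2 * Complex.I * a) • XX f) := by
  rw [map_sub, map_smul, XX_MM, MM_DD]; abel

lemma nrm_MM_sub_MM (a a' : ℝ) (f : 𝓢(ℝ, ℂ)) :
    nrm (MM a f - MM a' f) ≤ |a - a'| * nrm (XX (XX f)) := by
  have : MM a f - MM a' f = MM a' (MM (a - a') f - f) := by
    rw [map_sub, ← MM_add]; congr 3; ring
  rw [this, nrm_MM]; exact nrm_MM_sub_le _ _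

lemma nrm_PP_sub_PP (a a' : ℝ) (f : 𝓢(ℝ, ℂ)) :
    nrm (PP a f - PP a' f) ≤ |a - a'| * nrm (DD (DD f)) := by
  have : PP a f - PP a' f = PP a' (PP (a - a') f - f) := by
    rw [map_sub, ← PP_add]; congr 3; ring
  rw [this, nrm_PP]; exact nrm_PP_sub_le _ _

/-- The second derivative of a Hermite function after a chirp is still linear in `n`. -/
lemma nrm_DD_DD_MM (a : ℝ) (ha : |a| ≤ 1 / 2) (n : ℕ) :
    nrm (DD (DD (MM a (herm n)))) ≤ 4 * ((2 * n + 4) * nrm (herm n)) := by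
  obtain ⟨h1, h2, h3, h4⟩ := herm_quad n
  rw [DD_MM, DD_MM, nrm_MM]
  set f := herm n
  set c := (2 * n + 4) * nrm f
  have e : DD (DD f - (2 * Complex.I * a) • XX f) -
      (2 * Complex.I * a) • XX (DD f - (2 * Complex.I * a) • XX f) =
      (DD (DD f) - (2 * Complex.I * a) • DD (XX f)) -
      ((2 * Complex.I * a) • XX (DD f) - ((2 * Complex.I * a) * (2 * Complex.I * a)) •
        XX (XX f)) := by
    simp only [map_sub, map_smul]; module
  have hn : ‖(2 * Complex.I * a : ℂ)‖ ≤ 1 := by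
    simp only [norm_mul, Complex.norm_I, Complex.norm_real, Real.norm_eq_abs]
    norm_num; linarith
  have hs : ∀ (z : ℂ) (g : 𝓢(ℝ, ℂ)), ‖z‖ ≤ 1 → nrm (z • g) ≤ nrm g := fun z g hz => by
    rw [nrm_smul]; exact mul_le_of_le_one_left (nrm_nonneg g) hz
  have hn2 : ‖(2 * Complex.I * a : ℂ) * (2 * Complex.I * a)‖ ≤ 1 := by
    rw [norm_mul]; exact mul_le_one₀ hn (norm_nonneg _) hn
  rw [e]
  have b1 := nrm_sub_le (DD (DD f) - (2 * Complex.I * a) • DD (XX f))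
      ((2 * Complex.I * a) • XX (DD f) - ((2 * Complex.I * a) * (2 * Complex.I * a)) • XX (XX f))
  have b2 := nrm_sub_le (DD (DD f)) ((2 * Complex.I * a : ℂ) • DD (XX f))
  have b3 := nrm_sub_le ((2 * Complex.I * a : ℂ) • XX (DD f))
    (((2 * Complex.I * a : ℂ) * (2 * Complex.I * a)) • XX (XX f))
  have b4 := hs _ (DD (XX f)) hn
  have b5 := hs _ (XX (DD f)) hn
  have b6 := hs _ (XX (XX f)) hn2
  linarith

/-- Stability of the symmetric splitting in its parameters, on a Hermite function which is an
eigenvector of one of the two splittings. The eigenvector property spares a bound of `x²` after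
propagation. -/
lemma nrm_MPM_sub (α β α' β' : ℝ) (hα : |α'| ≤ 1 / 2) (n : ℕ) (z : ℂ) (hz : ‖z‖ = 1)
    (h : MPM α' β' (herm n) = z • herm n) :
    nrm (MPM α β (herm n) - z • herm n) ≤
      (2 * |α - α'| + 4 * |β - β'|) * ((2 * n + 4) * nrm (herm n)) := by
  obtain ⟨q1, -, -, -⟩ := herm_quad n
  have q2 := nrm_DD_DD_MM α' hα n
  set f := herm n
  have e : MPM α β f - z • f = MM α (PP β (MM α f - MM α' f)) +
      (MM α (PP β (MM α' f) - PP β' (MM α' f)) + (MM (α - α') (z • f) - z • f)) := by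
    have : MM (α - α') (z • f) = MM α (PP β' (MM α' f)) := by
      rw [← h, MPM_apply, ← MM_add, sub_add_cancel]
    rw [this, MPM_apply, map_sub, map_sub, map_sub]; abel
  have b1 := nrm_add_le (MM α (PP β (MM α f - MM α' f)))
      (MM α (PP β (MM α' f) - PP β' (MM α' f)) + (MM (α - α') (z • f) - z • f))
  have b2 := nrm_add_le (MM α (PP β (MM α' f) - PP β' (MM α' f))) (MM (α - α') (z • f) - z • f)
  have b3 := nrm_MM_sub_le (α - α') (z • f)
  rw [nrm_MM, nrm_PP] at b1
  rw [nrm_MM] at b2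
  rw [map_smul XX, map_smul XX, nrm_smul, hz, one_mul] at b3
  have b4 := nrm_PP_sub_PP β β' (MM α' f)
  have b5 := nrm_MM_sub_MM α α' f
  rw [e]
  have b6 := mul_le_mul_of_nonneg_left q1 (abs_nonneg (α - α'))
  have b7 := mul_le_mul_of_nonneg_left q2 (abs_nonneg (β - β'))
  linarith

/-! ### Order conditions for the matrices -/

/-- The coefficient `1/(4 - 4^{1/(2q+3)})` of the Suzuki recursion. -/
def kk (q : ℕ) : ℝ := 1 / (4 - (4 : ℝ) ^ ((1 : ℝ) / (2 * ((q : ℝ) + 1) + 1)))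

/-- The defining property of the Suzuki coefficient `k`: `4k^m + (1-4k)^m = 0` for `m = 2q+3`. -/
lemma kk_spec (q : ℕ) : 0 < kk q ∧ 1 - 4 * kk q ≠ 0 ∧
    4 * kk q ^ (2 * q + 3) + (1 - 4 * kk q) ^ (2 * q + 3) = 0 := by
  set r : ℝ := (4 : ℝ) ^ ((1 : ℝ) / (2 * ((q : ℝ) + 1) + 1)) with hr
  have hr0 : 0 < r := by positivity
  have hrm : r ^ (2 * q + 3) = 4 := by
    rw [hr, ← Real.rpow_natCast, ← Real.rpow_mul (by norm_num)]
    have : (1 : ℝ) / (2 * ((q : ℝ) + 1) + 1) * ((2 * q + 3 : ℕ) : ℝ) = 1 := by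
      push_cast; field_simp; ring
    rw [this, Real.rpow_one]
  have hr4 : r < 4 := by
    by_contra h
    push Not at h
    have h1 : (4 : ℝ) ^ (2 * q + 3) ≤ r ^ (2 * q + 3) := pow_le_pow_left₀ (by norm_num) h _
    have h2 : (4 : ℝ) ^ 2 ≤ 4 ^ (2 * q + 3) := pow_le_pow_right₀ (by norm_num) (by omega)
    rw [hrm] at h1
    norm_num at h2
    linarith
  have hk : kk q = 1 / (4 - r) := rfl
  have h4 : 4 - r ≠ 0 := by linarith
  have hk1 : 1 - 4 * kk q = -(r * kk q) := by rw [hk]; field_simp; ring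
  have hk0 : 0 < kk q := by rw [hk]; exact one_div_pos.2 (by linarith)
  refine ⟨hk0, ?_, ?_⟩
  · rw [hk1]; exact neg_ne_zero.2 (by positivity)
  · have ho : Odd (2 * q + 3) := ⟨q + 1, by ring⟩
    rw [hk1, ho.neg_pow, mul_pow, hrm]; ring

/-- The symmetric five-fold composition. -/
def stepM (k : ℝ) (S : ℝ → Matrix (Fin 2) (Fin 2) ℝ) (s : ℝ) : Matrix (Fin 2) (Fin 2) ℝ :=
  S (k * s) * S (k * s) * S ((1 - 4 * k) * s) * S (k * s) * S (k * s)

/-- The matrix of the approximant `U_{q+1}(s)`. -/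
def SM : ℕ → ℝ → Matrix (Fin 2) (Fin 2) ℝ
  | 0 => fun s => !![1 - s ^ 2 / 2, s; -s + s ^ 3 / 4, 1 - s ^ 2 / 2]
  | q + 1 => stepM (kk q) (SM q)

/-- The properties shared by all the approximants: analytic at `0`, unimodular, with equal diagonal
entries (the factorisation is palindromic), even diagonal, odd off-diagonal, and equal to the
identity at `s = 0`. -/
structure Palin (S : ℝ → Matrix (Fin 2) (Fin 2) ℝ) : Prop where
  an : ∀ i j, AnalyticAt ℝ (fun s => S s i j) 0
  diag : ∀ s, S s 1 1 = S s 0 0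
  det : ∀ s, S s 0 0 ^ 2 - S s 0 1 * S s 1 0 = 1
  even : ∀ s, S (-s) 0 0 = S s 0 0
  odd₁ : ∀ s, S (-s) 0 1 = -S s 0 1
  odd₂ : ∀ s, S (-s) 1 0 = -S s 1 0
  one : S 0 = 1

/-- The entries of the five-fold product, given that the diagonal entries of `S` are equal. -/
lemma stepM_apply {S : ℝ → Matrix (Fin 2) (Fin 2) ℝ} (hS : Palin S) (k s : ℝ) :
    let a := S (k * s) 0 0
    let b := S (k * s) 0 1
    let c := S (k * s) 1 0
    let p := S ((1 - 4 * k) * s) 0 0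
    let q := S ((1 - 4 * k) * s) 0 1
    let r := S ((1 - 4 * k) * s) 1 0
    let u := a ^ 2 + b * c
    let v := 2 * a * b
    let w := 2 * a * c
    stepM k S s 0 0 = u ^ 2 * p + u * v * r + u * w * q + v * w * p ∧
    stepM k S s 0 1 = 2 * u * v * p + v ^ 2 * r + u ^ 2 * q ∧
    stepM k S s 1 0 = 2 * u * w * p + w ^ 2 * q + u ^ 2 * r ∧
    stepM k S s 1 1 = u ^ 2 * p + u * v * r + u * w * q + v * w * p := by
  simp only [stepM, Matrix.mul_apply, Fin.sum_univ_two, hS.diag]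
  refine ⟨?_, ?_, ?_, ?_⟩ <;> ring

lemma analyticAt_matrix_mul {A B : ℝ → Matrix (Fin 2) (Fin 2) ℝ}
    (hA : ∀ i j, AnalyticAt ℝ (fun s => A s i j) 0) (hB : ∀ i j, AnalyticAt ℝ (fun s => B s i j) 0)
    (i j : Fin 2) : AnalyticAt ℝ (fun s => (A s * B s) i j) 0 := by
  simp only [Matrix.mul_apply, Fin.sum_univ_two]
  exact ((hA i 0).fun_mul (hB 0 j)).fun_add ((hA i 1).fun_mul (hB 1 j))

lemma Palin.step {S : ℝ → Matrix (Fin 2) (Fin 2) ℝ} (hS : Palin S) (k : ℝ) :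
    Palin (stepM k S) where
  an i j := by
    have h : ∀ (c : ℝ) (i j : Fin 2), AnalyticAt ℝ (fun s => S (c * s) i j) 0 := fun c i j => by
      have h1 : AnalyticAt ℝ (fun s => S s i j) ((fun s => c * s) 0) := by
        simpa using hS.an i j
      exact h1.comp (f := fun s => c * s) (by fun_prop)
    have h1 := h k
    have h2 := h (1 - 4 * k)
    exact analyticAt_matrix_mul (analyticAt_matrix_mul (analyticAt_matrix_mul
      (analyticAt_matrix_mul h1 h1) h2) h1) h1 i j
  diag s := by
    obtain ⟨h1, h2, h3, h4⟩ := stepM_apply hS k s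
    rw [h1, h4]
  det s := by
    obtain ⟨h1, h2, h3, h4⟩ := stepM_apply hS k s
    have e : stepM k S s 0 0 ^ 2 - stepM k S s 0 1 * stepM k S s 1 0 = (stepM k S s).det := by
      rw [Matrix.det_fin_two, h4, h1]; ring
    have d : ∀ s, (S s).det = 1 := fun s => by
      rw [Matrix.det_fin_two, hS.diag, ← hS.det s]; ring
    rw [e, stepM]
    simp only [Matrix.det_mul, d, mul_one]
  even s := by
    obtain ⟨h1, -, -, -⟩ := stepM_apply hS k s
    obtain ⟨g1, -, -, -⟩ := stepM_apply hS k (-s)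
    rw [h1, g1]; simp only [mul_neg, hS.even, hS.odd₁, hS.odd₂]; ring
  odd₁ s := by
    obtain ⟨-, h1, -, -⟩ := stepM_apply hS k s
    obtain ⟨-, g1, -, -⟩ := stepM_apply hS k (-s)
    rw [h1, g1]; simp only [mul_neg, hS.even, hS.odd₁, hS.odd₂]; ring
  odd₂ s := by
    obtain ⟨-, -, h1, -⟩ := stepM_apply hS k s
    obtain ⟨-, -, g1, -⟩ := stepM_apply hS k (-s)
    rw [h1, g1]; simp only [mul_neg, hS.even, hS.odd₁, hS.odd₂]; ring
  one := by simp [stepM, hS.one]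

lemma palin_SM (q : ℕ) : Palin (SM q) := by
  induction q with
  | zero =>
    refine ⟨fun i j => ?_, fun s => rfl, fun s => ?_, fun s => ?_, fun s => ?_, fun s => ?_, ?_⟩
    · fin_cases i <;> fin_cases j <;> simp [SM] <;> fun_prop
    · simp [SM]; ring
    · simp [SM]
    · simp [SM]
    · simp [SM]; ring
    · ext i j; fin_cases i <;> fin_cases j <;> simp [SM]
  | succ q ih => exact ih.step _

/-- An analytic function which is `o(s^m)` at `0` is divisible by every `s^j` with `j ≤ m + 1`. -/
lemma AnalyticAt.pow_dvd_of_tendsto {f : ℝ → ℝ} (hf : AnalyticAt ℝ f 0) (m : ℕ)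
    (h : Tendsto (fun s => f s / s ^ m) (𝓝[≠] 0) (𝓝 0)) (j : ℕ) (hj : j ≤ m + 1) :
    ∃ g : ℝ → ℝ, AnalyticAt ℝ g 0 ∧ ∀ᶠ s in 𝓝 0, f s = s ^ j * g s := by
  induction j with
  | zero => exact ⟨f, hf, by simp⟩
  | succ j ih =>
    obtain ⟨g, hg, hfg⟩ := ih (by omega)
    have h0 : g 0 = 0 := by
      have h1 : Tendsto g (𝓝[≠] 0) (𝓝 (g 0)) := hg.continuousAt.tendsto.mono_left nhdsWithin_le_nhds
      have h2 : Tendsto (fun s : ℝ => s ^ (m - j) * (f s / s ^ m)) (𝓝[≠] 0) (𝓝 ((0 : ℝ) ^ (m - j) * 0)) :=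
        (((continuous_pow (m - j)).tendsto (0 : ℝ)).mono_left nhdsWithin_le_nhds).mul h
      rw [mul_zero] at h2
      refine tendsto_nhds_unique (h1.congr' ?_) h2
      filter_upwards [hfg.filter_mono nhdsWithin_le_nhds, self_mem_nhdsWithin] with s hs hs0
      have hs0 : s ≠ 0 := hs0
      have : s ^ m = s ^ j * s ^ (m - j) := by rw [← pow_add]; congr 1; omega
      rw [hs, this]; field_simp
    have h1 : (1 : ℕ) ≤ analyticOrderAt g 0 := by
      rw [Nat.cast_one, Order.one_le_iff_ne_zero]
      exact hg.analyticOrderAt_ne_zero.2 h0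
    obtain ⟨g₂, hg₂, h2⟩ := (natCast_le_analyticOrderAt hg).1 h1
    refine ⟨g₂, hg₂, ?_⟩
    filter_upwards [hfg, h2] with s a b
    rw [a, b]; simp; ring

/-- For odd analytic functions, vanishing to order beyond `s^m` with `m` odd improves to
`O(s^{m+2})`. -/
lemma odd_boost {f : ℝ → ℝ} (hf : AnalyticAt ℝ f 0) (hodd : ∀ s, f (-s) = -f s) (m : ℕ) (hm : Odd m)
    (h : Tendsto (fun s => f s / s ^ m) (𝓝[≠] 0) (𝓝 0)) :
    ∃ β, Tendsto (fun s => f s / s ^ (m + 2)) (𝓝[≠] 0) (𝓝 β) := by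
  obtain ⟨g, hg, hfg⟩ := hf.pow_dvd_of_tendsto m h (m + 1) le_rfl
  have hev : Even (m + 1) := hm.add_one
  have hneg : Tendsto (fun s : ℝ => -s) (𝓝[≠] 0) (𝓝[≠] 0) := by
    refine tendsto_nhdsWithin_iff.2 ⟨?_, ?_⟩
    · have : Tendsto (fun s : ℝ => -s) (𝓝 0) (𝓝 (-0)) := continuous_neg.tendsto 0
      rw [neg_zero] at this
      exact this.mono_left nhdsWithin_le_nhds
    · filter_upwards [self_mem_nhdsWithin] with s hs
      exact neg_ne_zero.2 hs
  have hg1 : Tendsto g (𝓝[≠] 0) (𝓝 (g 0)) := hg.continuousAt.tendsto.mono_left nhdsWithin_le_nhds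
  have h0 : g 0 = 0 := by
    have h2 : Tendsto (fun s => -g (-s)) (𝓝[≠] 0) (𝓝 (-g 0)) := (hg1.comp hneg).neg
    have h3 : g 0 = -g 0 := by
      refine tendsto_nhds_unique (hg1.congr' ?_) h2
      have e := hfg.filter_mono (nhdsWithin_le_nhds (s := {0}ᶜ))
      filter_upwards [e, hneg.eventually e, self_mem_nhdsWithin] with s a b hs
      rw [hodd, a, hev.neg_pow] at b
      have hs : s ≠ 0 := hs
      have : s ^ (m + 1) ≠ 0 := pow_ne_zero _ hs
      apply mul_left_cancel₀ this
      linarith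
    linarith
  have h1 : (1 : ℕ) ≤ analyticOrderAt g 0 := by
    rw [Nat.cast_one, Order.one_le_iff_ne_zero]
    exact hg.analyticOrderAt_ne_zero.2 h0
  obtain ⟨g₂, hg₂, h2⟩ := (natCast_le_analyticOrderAt hg).1 h1
  refine ⟨g₂ 0, (hg₂.continuousAt.tendsto.mono_left nhdsWithin_le_nhds).congr' ?_⟩
  filter_upwards [hfg.filter_mono nhdsWithin_le_nhds, h2.filter_mono nhdsWithin_le_nhds,
    self_mem_nhdsWithin] with s a b hs
  have hs : s ≠ 0 := hs
  rw [a, b, sub_zero, smul_eq_mul, pow_one]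
  field_simp
  ring

/-- The off-diagonal entries of `S(s)` agree with those of `Rot s` up to `O(s^m)`, the quotients by
`s^m` having limits. -/
def OrderCond (m : ℕ) (S : ℝ → Matrix (Fin 2) (Fin 2) ℝ) : Prop :=
  (∃ β, Tendsto (fun s => (S s 0 1 - Real.sin s) / s ^ m) (𝓝[≠] 0) (𝓝 β)) ∧
  (∃ γ, Tendsto (fun s => (S s 1 0 + Real.sin s) / s ^ m) (𝓝[≠] 0) (𝓝 γ))

lemma Palin.boost {S : ℝ → Matrix (Fin 2) (Fin 2) ℝ} (hS : Palin S) (m : ℕ) (hm : Odd m)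
    (h₁ : Tendsto (fun s => (S s 0 1 - Real.sin s) / s ^ m) (𝓝[≠] 0) (𝓝 0))
    (h₂ : Tendsto (fun s => (S s 1 0 + Real.sin s) / s ^ m) (𝓝[≠] 0) (𝓝 0)) :
    OrderCond (m + 2) S :=
  ⟨odd_boost ((hS.an 0 1).sub Real.analyticAt_sin)
    (fun s => by simp only [Pi.sub_apply]; rw [hS.odd₁, Real.sin_neg]; ring) m hm h₁,
   odd_boost ((hS.an 1 0).add Real.analyticAt_sin)
    (fun s => by simp only [Pi.add_apply]; rw [hS.odd₂, Real.sin_neg]; ring) m hm h₂⟩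

lemma Palin.tendsto {S : ℝ → Matrix (Fin 2) (Fin 2) ℝ} (hS : Palin S) (i j : Fin 2) :
    Tendsto (fun s => S s i j) (𝓝[≠] 0) (𝓝 ((1 : Matrix (Fin 2) (Fin 2) ℝ) i j)) := by
  have := (hS.an i j).continuousAt.tendsto.mono_left (nhdsWithin_le_nhds (s := {0}ᶜ))
  rwa [hS.one] at this

lemma tendsto_sin : Tendsto Real.sin (𝓝[≠] 0) (𝓝 0) := by
  have := (Real.continuous_sin.tendsto 0).mono_left (nhdsWithin_le_nhds (s := {0}ᶜ))
  rwa [Real.sin_zero] at this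

lemma tendsto_cos : Tendsto Real.cos (𝓝[≠] 0) (𝓝 1) := by
  have := (Real.continuous_cos.tendsto 0).mono_left (nhdsWithin_le_nhds (s := {0}ᶜ))
  rwa [Real.cos_zero] at this

/-- The determinant condition controls the diagonal by the off-diagonal, with a gain: since
`(a - cos)(a + cos) = (b - sin) c + (c + sin) sin`, the diagonal error is `o(s^m)`. -/
lemma Palin.diag_order {S : ℝ → Matrix (Fin 2) (Fin 2) ℝ} (hS : Palin S) {m : ℕ} (h : OrderCond m S) :
    Tendsto (fun s => (S s 0 0 - Real.cos s) / s ^ m) (𝓝[≠] 0) (𝓝 0) := by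
  obtain ⟨⟨β, hβ⟩, ⟨γ, hγ⟩⟩ := h
  have ha : Tendsto (fun s => S s 0 0 + Real.cos s) (𝓝[≠] 0) (𝓝 (1 + 1)) := by
    simpa using (hS.tendsto 0 0).add tendsto_cos
  have hc : Tendsto (fun s => S s 1 0) (𝓝[≠] 0) (𝓝 0) := by simpa using hS.tendsto 1 0
  have hn := (hβ.mul hc).add (hγ.mul tendsto_sin)
  have key := hn.div ha (by norm_num)
  simp only [mul_zero, add_zero, zero_div] at key
  refine key.congr' ?_
  filter_upwards [ha.eventually_ne (by norm_num : (1 + 1 : ℝ) ≠ 0), self_mem_nhdsWithin] with s h1 hs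
  have hs : s ≠ 0 := hs
  simp only [Pi.div_apply]
  rw [div_eq_iff h1]
  field_simp
  have h2 := hS.det s
  have h3 := Real.sin_sq_add_cos_sq s
  linear_combination -h2 + h3

lemma Rot_mul (s t : ℝ) : Rot s * Rot t = Rot (s + t) := by
  ext i j
  fin_cases i <;> fin_cases j <;> simp [Rot, Real.cos_add, Real.sin_add] <;> ring

/-- `S - R` has leading term `s^m E`, where `S` and `R` tend to the identity. Under products the
leading coefficients add up. -/
def Lead (m : ℕ) (S R : ℝ → Matrix (Fin 2) (Fin 2) ℝ) (E : Matrix (Fin 2) (Fin 2) ℝ) : Prop :=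
  Tendsto S (𝓝[≠] 0) (𝓝 1) ∧ Tendsto R (𝓝[≠] 0) (𝓝 1) ∧
    Tendsto (fun s => (s ^ m)⁻¹ • (S s - R s)) (𝓝[≠] 0) (𝓝 E)

lemma Lead.mul {m : ℕ} {S R S' R' : ℝ → Matrix (Fin 2) (Fin 2) ℝ} {E E' : Matrix (Fin 2) (Fin 2) ℝ}
    (h : Lead m S R E) (h' : Lead m S' R' E') :
    Lead m (fun s => S s * S' s) (fun s => R s * R' s) (E + E') := by
  obtain ⟨h1, h2, h3⟩ := h
  obtain ⟨g1, g2, g3⟩ := h'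
  refine ⟨by simpa using h1.mul g1, by simpa using h2.mul g2, ?_⟩
  have := (h3.mul g1).add (h2.mul g3)
  rw [mul_one, one_mul] at this
  refine this.congr fun s => ?_
  rw [smul_mul_assoc, mul_smul_comm, ← smul_add]
  congr 1
  noncomm_ring

lemma Lead.scale {m : ℕ} {S R : ℝ → Matrix (Fin 2) (Fin 2) ℝ} {E : Matrix (Fin 2) (Fin 2) ℝ}
    (h : Lead m S R E) (k : ℝ) (hk : k ≠ 0) :
    Lead m (fun s => S (k * s)) (fun s => R (k * s)) (k ^ m • E) := by
  have ht : Tendsto (fun s : ℝ => k * s) (𝓝[≠] 0) (𝓝[≠] 0) := by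
    refine tendsto_nhdsWithin_iff.2 ⟨?_, ?_⟩
    · have : Tendsto (fun s : ℝ => k * s) (𝓝 0) (𝓝 (k * 0)) := (continuous_const_mul k).tendsto 0
      rw [mul_zero] at this
      exact this.mono_left nhdsWithin_le_nhds
    · filter_upwards [self_mem_nhdsWithin] with s hs
      exact mul_ne_zero hk hs
  refine ⟨h.1.comp ht, h.2.1.comp ht, ?_⟩
  have := (h.2.2.comp ht).const_smul (k ^ m)
  refine this.congr fun s => ?_
  simp only [Function.comp, smul_smul]
  congr 1
  rw [mul_pow, mul_inv, ← mul_assoc, mul_inv_cancel₀ (pow_ne_zero _ hk), one_mul]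

lemma tendsto_matrix {S : ℝ → Matrix (Fin 2) (Fin 2) ℝ} {E : Matrix (Fin 2) (Fin 2) ℝ}
    {l : Filter ℝ} :
    Tendsto S l (𝓝 E) ↔ ∀ i j, Tendsto (fun s => S s i j) l (𝓝 (E i j)) := by
  exact (tendsto_pi_nhds (A := fun _ : Fin 2 => Fin 2 → ℝ)).trans
    (forall_congr' fun i => tendsto_pi_nhds)

lemma Palin.lead {S : ℝ → Matrix (Fin 2) (Fin 2) ℝ} (hS : Palin S) {m : ℕ} (h : OrderCond m S) :
    ∃ E, Lead m S Rot E := by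
  have hd := hS.diag_order h
  obtain ⟨⟨β, hβ⟩, ⟨γ, hγ⟩⟩ := h
  refine ⟨!![0, β; γ, 0], ?_, ?_, ?_⟩
  · exact tendsto_matrix.2 hS.tendsto
  · refine tendsto_matrix.2 fun i j => ?_
    have h1 := tendsto_sin
    have h2 := tendsto_cos
    have h3 := h1.neg
    rw [neg_zero] at h3
    fin_cases i <;> fin_cases j <;> simpa [Rot]
  · refine tendsto_matrix.2 fun i j => ?_
    fin_cases i <;> fin_cases j
    · simpa [Rot, div_eq_inv_mul] using hd
    · simpa [Rot, div_eq_inv_mul] using hβ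
    · simpa [Rot, div_eq_inv_mul] using hγ
    · simpa [Rot, div_eq_inv_mul, hS.diag] using hd

/-- Each step of the Suzuki recursion raises the order by two: the choice of `k` kills the leading
error and the symmetry kills the next one. -/
lemma order_SM (q : ℕ) : OrderCond (2 * q + 3) (SM q) := by
  have hsin : Tendsto (fun s => Real.sin s / s) (𝓝[≠] 0) (𝓝 1) := by
    have := (Real.hasDerivAt_sin 0)
    rw [hasDerivAt_iff_tendsto_slope, Real.cos_zero] at this
    refine this.congr fun s => ?_
    simp [slope_def_field]
  induction q with
  | zero =>
    refine (palin_SM 0).boost 1 odd_one ?_ ?_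
    · have : Tendsto (fun s => 1 - Real.sin s / s) (𝓝[≠] 0) (𝓝 (1 - 1)) := hsin.const_sub 1
      rw [sub_self] at this
      refine this.congr' ?_
      filter_upwards [self_mem_nhdsWithin] with s hs
      have hs : s ≠ 0 := hs
      simp [SM]; field_simp
    · have h2 : Tendsto (fun s : ℝ => -1 + s ^ 2 / 4) (𝓝[≠] 0) (𝓝 (-1 + 0 ^ 2 / 4)) := by
        refine Tendsto.mono_left (Continuous.tendsto ?_ 0) nhdsWithin_le_nhds
        fun_prop
      have := h2.add hsin
      norm_num at this
      refine this.congr' ?_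
      filter_upwards [self_mem_nhdsWithin] with s hs
      have hs : s ≠ 0 := hs
      simp [SM]; field_simp
  | succ q ih =>
    obtain ⟨E, hE⟩ := (palin_SM q).lead ih
    obtain ⟨k0, k1, k2⟩ := kk_spec q
    have a := hE.scale (kk q) k0.ne'
    have b := hE.scale (1 - 4 * kk q) k1
    have key := ((((a.mul a).mul b).mul a).mul a).2.2
    have hEE : kk q ^ (2 * q + 3) • E + kk q ^ (2 * q + 3) • E + (1 - 4 * kk q) ^ (2 * q + 3) • E +
        kk q ^ (2 * q + 3) • E + kk q ^ (2 * q + 3) • E = 0 := by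
      rw [← add_smul, ← add_smul, ← add_smul, ← add_smul]
      have : kk q ^ (2 * q + 3) + kk q ^ (2 * q + 3) + (1 - 4 * kk q) ^ (2 * q + 3) +
        kk q ^ (2 * q + 3) + kk q ^ (2 * q + 3) = 0 := by linarith
      rw [this, zero_smul]
    rw [hEE] at key
    have hR : ∀ s, Rot (kk q * s) * Rot (kk q * s) * Rot ((1 - 4 * kk q) * s) * Rot (kk q * s) *
        Rot (kk q * s) = Rot s := fun s => by
      simp only [Rot_mul]; congr 1; ring
    simp only [hR] at key
    rw [tendsto_matrix] at key
    have hm : Odd (2 * q + 3) := ⟨q + 1, by ring⟩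
    refine (palin_SM (q + 1)).boost (2 * q + 3) hm ?_ ?_
    · have := key 0 1
      simp only [Matrix.smul_apply, Matrix.sub_apply, Matrix.zero_apply, smul_eq_mul] at this
      refine this.congr fun s => ?_
      rw [div_eq_inv_mul]; rfl
    · have := key 1 0
      simp only [Matrix.smul_apply, Matrix.sub_apply, Matrix.zero_apply, smul_eq_mul] at this
      refine this.congr fun s => ?_
      rw [div_eq_inv_mul, ← sub_neg_eq_add]; rfl

/-! ### The approximants as operators on the Schwartz space -/

/-- The approximant `U_{q+1}(s)` as an endomorphism of the Schwartz space. -/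
def TT : ℕ → ℝ → Op
  | 0 => fun s => MPM (s / 4) (s / 2)
  | q + 1 => fun s => TT q (kk q * s) ∘ₗ (TT q (kk q * s) ∘ₗ (TT q ((1 - 4 * kk q) * s) ∘ₗ
      (TT q (kk q * s) ∘ₗ TT q (kk q * s))))

lemma Uapprox_coe (q : ℕ) (s : ℝ) (f : 𝓢(ℝ, ℂ)) : Uapprox (q + 1) s (⇑f) = ⇑(TT q s f) := by
  induction q generalizing s f with
  | zero =>
    show Mop (s / 4) (Pop (s / 2) (Mop (s / 4) f)) = _
    rw [Mop_coe, Pop_coe, Mop_coe]; rfl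
  | succ q ih =>
    have e1 : s / (4 - (4 : ℝ) ^ ((1 : ℝ) / (2 * ((q : ℝ) + 1) + 1))) = kk q * s := by
      rw [kk]; ring
    have e2 : s - 4 * (kk q * s) = (1 - 4 * kk q) * s := by ring
    simp only [Uapprox]
    rw [e1, e2]
    simp only [ih]
    rfl

lemma rep_TT (q : ℕ) (s : ℝ) : Implements (TT q s) (SM q s) := by
  induction q generalizing s with
  | zero =>
    have h := rep_MPM (s / 4) (s / 2)
    have e : SM 0 s = !![1 - 4 * (s / 4) * (s / 2), 2 * (s / 2);
        -4 * (s / 4) + 8 * (s / 4) ^ 2 * (s / 2), 1 - 4 * (s / 4) * (s / 2)] := by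
      simp only [SM]
      congr! 3 <;> ring_nf
    rw [e]; exact h
  | succ q ih =>
    exact (ih _).comp ((ih _).comp ((ih _).comp ((ih _).comp (ih _))))

/-- Strong continuity at the identity of an operator family, for the `L²` norm. -/
def Near (T : ℝ → Op) : Prop := ∀ f, Tendsto (fun s => nrm (T s f - f)) (𝓝 0) (𝓝 0)

lemma Near.comp {T V : ℝ → Op} (hT : Near T) (hV : Near V)
    (hN : ∀ s f, nrm (T s f) = nrm f) : Near (fun s => T s ∘ₗ V s) := fun f => by
  have h := (hV f).add (hT f)
  rw [add_zero] at h
  refine squeeze_zero (fun s => nrm_nonneg _) (fun s => ?_) h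
  have e : (T s ∘ₗ V s) f - f = T s (V s f - f) + (T s f - f) := by
    rw [map_sub, LinearMap.comp_apply]; abel
  rw [e]
  refine (nrm_add_le _ _).trans ?_
  rw [hN]

lemma Near.scale {T : ℝ → Op} (hT : Near T) (k : ℝ) : Near (fun s => T (k * s)) := fun f => by
  have : Tendsto (fun s : ℝ => k * s) (𝓝 0) (𝓝 0) := by
    simpa using (continuous_const_mul k).tendsto 0
  exact (hT f).comp this

lemma near_ML {α : ℝ → ℝ} (h : Tendsto α (𝓝 0) (𝓝 0)) : Near (fun s => ML (α s)) := fun f => by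
  have h1 := h.abs.mul_const (nrm (XX (XX f)))
  rw [abs_zero, zero_mul] at h1
  exact squeeze_zero (fun s => nrm_nonneg _) (fun s => nrm_MM_sub_le (α s) f) h1

lemma near_PP {β : ℝ → ℝ} (h : Tendsto β (𝓝 0) (𝓝 0)) : Near (fun s => PP (β s)) := fun f => by
  have h1 := h.abs.mul_const (nrm (DD (DD f)))
  rw [abs_zero, zero_mul] at h1
  exact squeeze_zero (fun s => nrm_nonneg _) (fun s => nrm_PP_sub_le (β s) f) h1

lemma near_MPM {α β : ℝ → ℝ} (hα : Tendsto α (𝓝 0) (𝓝 0)) (hβ : Tendsto β (𝓝 0) (𝓝 0)) :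
    Near (fun s => MPM (α s) (β s)) :=
  (near_ML hα).comp ((near_PP hβ).comp (near_ML hα) fun _ f => nrm_PP _ f) fun _ f => nrm_MM _ f

lemma near_TT (q : ℕ) : Near (TT q) := by
  induction q with
  | zero =>
    refine near_MPM (α := fun s => s / 4) (β := fun s => s / 2) ?_ ?_
    · simpa using (continuous_id.div_const (4 : ℝ)).tendsto 0
    · simpa using (continuous_id.div_const (2 : ℝ)).tendsto 0
  | succ q ih =>
    have a := ih.scale (kk q)
    have b := ih.scale (1 - 4 * kk q)
    have hN : ∀ s f, nrm (TT q s f) = nrm f := fun s f => (rep_TT q s).hN f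
    exact a.comp (a.comp (b.comp (a.comp a fun s => hN _) fun s => hN _) fun s => hN _) fun s => hN _

/-! ### The error bound -/

/-- The parameter `α` for which `M(α) P(β) M(α)` implements a given unimodular matrix with
constant diagonal `a` and lower left entry `c`; the matching `β` is half the upper right entry. -/
def alphaOf (a c : ℝ) : ℝ := -c / (2 * (a + 1))

/-- Every unimodular matrix with constant diagonal `a ≠ -1` is implemented by a symmetric splitting. -/
lemma rep_alpha {a b c : ℝ} (ha : a + 1 ≠ 0) (hdet : a ^ 2 - b * c = 1) :
    Implements (MPM (alphaOf a c) (b / 2)) !![a, b; c, a] := by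
  have h := rep_MPM (alphaOf a c) (b / 2)
  have e1 : 1 - 4 * alphaOf a c * (b / 2) = a := by
    rw [alphaOf]; field_simp; linear_combination -4 * hdet
  have e2 : -4 * alphaOf a c + 8 * alphaOf a c ^ 2 * (b / 2) = c := by
    have : -4 * alphaOf a c + 8 * alphaOf a c ^ 2 * (b / 2) =
        -2 * alphaOf a c * (1 + (1 - 4 * alphaOf a c * (b / 2))) := by ring
    rw [this, e1, alphaOf]; field_simp; ring
  have e3 : 2 * (b / 2) = b := by ring
  rw [e1, e2, e3] at h
  exact h

lemma eventually_of_punctured {P : ℝ → Prop} (h : ∀ᶠ s in 𝓝[≠] (0 : ℝ), P s) (h0 : P 0) :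
    ∀ᶠ s in 𝓝 (0 : ℝ), P s := by
  rw [eventually_nhdsWithin_iff] at h
  filter_upwards [h] with s hs
  by_cases h : s = 0
  · rwa [h]
  · exact hs h

/-- A convergent quotient `f(s)/s^m` gives `|f(s)| ≤ C |s|^m` near `0`. -/
lemma bound_of_tendsto {f : ℝ → ℝ} {m : ℕ} {β : ℝ} (hm : m ≠ 0) (h0 : f 0 = 0)
    (h : Tendsto (fun s => f s / s ^ m) (𝓝[≠] 0) (𝓝 β)) :
    ∀ᶠ s in 𝓝 (0 : ℝ), |f s| ≤ (|β| + 1) * |s| ^ m := by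
  refine eventually_of_punctured ?_ (by simp [h0, hm])
  filter_upwards [h.abs.eventually (gt_mem_nhds (lt_add_one |β|)), self_mem_nhdsWithin] with s hs h1
  have h1 : s ≠ 0 := h1
  have h2 : 0 < |s| ^ m := by positivity
  rw [abs_div, abs_pow, div_lt_iff₀ h2] at hs
  exact hs.le

/-- The error bound for small `s`. The approximant and the exact flow are both written as
`M(α) P(β) M(α)`, with parameters that differ by `O(s^{2q+3})`. -/
lemma small_bound (q : ℕ) : ∃ C : ℝ, 0 < C ∧ ∀ᶠ s in 𝓝 (0 : ℝ), ∀ n : ℕ,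
    nrm (TT q s (herm n) - Complex.exp (-Complex.I * s * (n + 1 / 2)) • herm n) ≤
      C * (n + 2) * |s| ^ (2 * q + 3) * nrm (herm n) := by
  have hP := palin_SM q
  have hO := order_SM q
  have hd := hP.diag_order hO
  obtain ⟨⟨β, hβ⟩, ⟨γ, hγ⟩⟩ := hO
  set m := 2 * q + 3 with hm
  have hm0 : m ≠ 0 := by omega
  have one := hP.one
  have b1 := bound_of_tendsto hm0 (by simp [one]) hβ
  have b2 := bound_of_tendsto hm0 (by simp [one]) hγ
  have b3 := bound_of_tendsto hm0 (by simp [one]) hd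
  set K := max (|β| + 1) (max (|γ| + 1) (|(0 : ℝ)| + 1)) with hK
  have k1 : |β| + 1 ≤ K := le_max_left _ _
  have k2 : |γ| + 1 ≤ K := (le_max_left _ _).trans (le_max_right _ _)
  have k3 : |(0 : ℝ)| + 1 ≤ K := (le_max_right _ _).trans (le_max_right _ _)
  have K0 : 0 < K := by rw [abs_zero] at k3; linarith
  have ta : Tendsto (fun s => SM q s 0 0) (𝓝 0) (𝓝 1) := by
    simpa [one] using (hP.an 0 0).continuousAt.tendsto
  have tb : Tendsto (fun s => SM q s 0 1) (𝓝 0) (𝓝 0) := by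
    simpa [one] using (hP.an 0 1).continuousAt.tendsto
  have tc : Tendsto (fun s => SM q s 1 0) (𝓝 0) (𝓝 0) := by
    simpa [one] using (hP.an 1 0).continuousAt.tendsto
  have ts : Tendsto Real.sin (𝓝 0) (𝓝 0) := by simpa using Real.continuous_sin.tendsto 0
  have tk : Tendsto Real.cos (𝓝 0) (𝓝 1) := by simpa using Real.continuous_cos.tendsto 0
  have tα : ∀ {a c : ℝ → ℝ}, Tendsto a (𝓝 0) (𝓝 1) → Tendsto c (𝓝 0) (𝓝 0) →
      Tendsto (fun s => alphaOf (a s) (c s)) (𝓝 0) (𝓝 0) := fun ha hc => by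
    have := hc.neg.div ((ha.add_const 1).const_mul 2) (by norm_num)
    rw [neg_zero, zero_div] at this
    exact this
  have tβ : ∀ {b : ℝ → ℝ}, Tendsto b (𝓝 0) (𝓝 0) → Tendsto (fun s => b s / 2) (𝓝 0) (𝓝 0) :=
    fun hb => by simpa using hb.div_const 2
  have ts' : Tendsto (fun s => -Real.sin s) (𝓝 0) (𝓝 0) := by simpa using ts.neg
  have tαR := tα tk ts'
  have g := nrm_gauss_pos
  have close : ∀ {T : ℝ → Op}, Near T → ∀ᶠ s in 𝓝 (0 : ℝ), nrm (T s gauss - gauss) < nrm gauss / 2 :=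
    fun hT => (hT gauss).eventually (gt_mem_nhds (by linarith))
  -- `2 |Δα| + 4 |Δβ| ≤ 6 K |s|^m`, and `2n + 4 = 2 (n + 2)`
  refine ⟨12 * K, by positivity, ?_⟩
  filter_upwards [b1, b2, b3, ta.eventually (lt_mem_nhds (show (1 / 2 : ℝ) < 1 by norm_num)),
    tk.eventually (lt_mem_nhds (show (1 / 2 : ℝ) < 1 by norm_num)),
    tαR.abs.eventually (gt_mem_nhds (show |(0 : ℝ)| < 1 / 2 by norm_num)),
    close (near_TT q), close (near_MPM (tα ta tc) (tβ tb)), close (near_MPM tαR (tβ ts)),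
    continuous_abs.continuousAt.eventually (gt_mem_nhds (show |(0 : ℝ)| < 1 by norm_num))]
    with s c1 c2 c3 ha hcos hαR n1 n2 n3 hs n
  have hsm : (0 : ℝ) ≤ |s| ^ m := by positivity
  have hT := rep_TT q s
  have hV : Implements (MPM (alphaOf (SM q s 0 0) (SM q s 1 0)) (SM q s 0 1 / 2)) (SM q s) := by
    have := rep_alpha (by linarith) (hP.det s)
    convert this using 1
    ext i j
    fin_cases i <;> fin_cases j <;> simp [hP.diag]
  have hR : Implements (MPM (alphaOf (Real.cos s) (-Real.sin s)) (Real.sin s / 2)) (Rot s) :=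
    rep_alpha (by linarith) (by linarith [Real.sin_sq_add_cos_sq s])
  rw [hT.unique hV n1 n2 n]
  have hrot := hR.rot hs n3 n
  have hz : ‖Complex.exp (-Complex.I * s * (n + 1 / 2))‖ = 1 := by
    have : -Complex.I * s * (n + 1 / 2) = Complex.I * ((-(s * (n + 1 / 2)) : ℝ) : ℂ) := by
      push_cast; ring
    rw [this, mul_comm]; exact Complex.norm_exp_ofReal_mul_I _
  refine (nrm_MPM_sub _ _ _ _ hαR.le n _ hz hrot).trans ?_
  set a := SM q s 0 0
  set b := SM q s 0 1
  set c := SM q s 1 0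
  have d1 : |b / 2 - Real.sin s / 2| ≤ K * |s| ^ m := by
    rw [← sub_div, abs_div, abs_two]
    have := mul_le_mul_of_nonneg_right k1 hsm
    have := abs_nonneg (b - Real.sin s)
    linarith
  have d2 : |alphaOf a c - alphaOf (Real.cos s) (-Real.sin s)| ≤ K * |s| ^ m := by
    have e : alphaOf a c - alphaOf (Real.cos s) (-Real.sin s) =
        -((c + Real.sin s) / (a + 1) + Real.sin s / (Real.cos s + 1) * ((a - Real.cos s) / (a + 1))) / 2 := by
      have h1 : a + 1 ≠ 0 := by linarith
      have h2 : Real.cos s + 1 ≠ 0 := by linarith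
      rw [alphaOf, alphaOf]; field_simp; ring
    have f1 : |(c + Real.sin s) / (a + 1)| ≤ K * |s| ^ m := by
      rw [abs_div, abs_of_pos (by linarith : 0 < a + 1)]
      refine (div_le_self (abs_nonneg _) (by linarith)).trans (c2.trans ?_)
      exact mul_le_mul_of_nonneg_right k2 hsm
    have f2 : |(a - Real.cos s) / (a + 1)| ≤ K * |s| ^ m := by
      rw [abs_div, abs_of_pos (by linarith : 0 < a + 1)]
      refine (div_le_self (abs_nonneg _) (by linarith)).trans (c3.trans ?_)
      exact mul_le_mul_of_nonneg_right k3 hsm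
    have f3 : |Real.sin s / (Real.cos s + 1)| ≤ 1 := by
      rw [abs_div, abs_of_pos (by linarith : 0 < Real.cos s + 1)]
      refine (div_le_self (abs_nonneg _) (by linarith)).trans (Real.abs_sin_le_one s)
    have f4 := mul_le_of_le_one_left (abs_nonneg ((a - Real.cos s) / (a + 1))) f3
    rw [← abs_mul] at f4
    rw [e, abs_div, abs_neg, abs_two]
    have := abs_add_le ((c + Real.sin s) / (a + 1))
      (Real.sin s / (Real.cos s + 1) * ((a - Real.cos s) / (a + 1)))
    linarith
  have hX : 0 ≤ (2 * (n : ℝ) + 4) * nrm (herm n) := mul_nonneg (by positivity) (nrm_nonneg _)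
  have := mul_le_mul_of_nonneg_right (show 2 * |alphaOf a c - alphaOf (Real.cos s) (-Real.sin s)| +
    4 * |b / 2 - Real.sin s / 2| ≤ 6 * (K * |s| ^ m) by linarith) hX
  refine this.trans (le_of_eq ?_)
  ring

lemma error_eq (q : ℕ) (s : ℝ) (n : ℕ) (z : ℂ) :
    l2norm (fun x => Uapprox (q + 1) s (hermiteFnC n) x - z * hermiteFnC n x) =
      ‖(hermC n : ℂ)‖ * nrm (TT q s (herm n) - z • herm n) := by
  rw [hermiteFnC_eq, Uapprox_coe, ← nrm_smul, ← l2norm_coe]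
  congr 1
  ext x
  simp only [map_smul, smul_apply, sub_apply, smul_eq_mul]
  ring

/-- Refined Trotter–Suzuki error bound for the QHO: there is `d ≥ 1` such that for each
`p ≥ 1` there is `C_p > 0` with
`‖U_p(s)ψₙ - e^{-is(n+1/2)}ψₙ‖_{L²} ≤ C_p (n+2) |s|^{2p+1}` whenever `|s| < 1/d`. -/
theorem trotter_suzuki_qho_error_bound :
    ∃ d : ℝ, 1 ≤ d ∧ ∀ p : ℕ, 1 ≤ p → ∃ C : ℝ, 0 < C ∧
      ∀ s : ℝ, |s| < 1 / d → ∀ n : ℕ,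
        l2norm (fun x => Uapprox p s (hermiteFnC n) x -
            Complex.exp (-Complex.I * s * ((n : ℂ) + 1 / 2)) * hermiteFnC n x)
          ≤ C * ((n : ℝ) + 2) * |s| ^ (2 * p + 1) := by
  refine ⟨1, le_rfl, fun p hp => ?_⟩
  obtain ⟨q, rfl⟩ : ∃ q, p = q + 1 := ⟨p - 1, by omega⟩
  obtain ⟨C, hC, h⟩ := small_bound q
  obtain ⟨δ, hδ, h⟩ := Metric.eventually_nhds_iff.1 h
  have hδm : 0 < δ ^ (2 * q + 3) := by positivity
  refine ⟨C + 1 / δ ^ (2 * q + 3), by positivity, fun s _ n => ?_⟩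
  rw [error_eq, show 2 * (q + 1) + 1 = 2 * q + 3 by ring]
  have hc := hermC_mul n
  have hsm : (0 : ℝ) ≤ |s| ^ (2 * q + 3) := by positivity
  by_cases hs : |s| < δ
  · have h1 := mul_le_mul_of_nonneg_left (h (by simpa using hs) n) (norm_nonneg (hermC n : ℂ))
    refine h1.trans ?_
    have h2 : ‖(hermC n : ℂ)‖ * (C * (n + 2) * |s| ^ (2 * q + 3) * nrm (herm n)) =
        C * (n + 2) * |s| ^ (2 * q + 3) := by
      linear_combination (C * (n + 2) * |s| ^ (2 * q + 3)) * hc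
    rw [h2]
    gcongr
    exact le_add_of_nonneg_right (by positivity)
  -- away from `0` both vectors have norm one and the bound is trivial
  · push Not at hs
    have hz : ‖Complex.exp (-Complex.I * s * ((n : ℂ) + 1 / 2))‖ = 1 := by
      have : -Complex.I * s * ((n : ℂ) + 1 / 2) = ((-(s * (n + 1 / 2)) : ℝ) : ℂ) * Complex.I := by
        push_cast; ring
      rw [this]; exact Complex.norm_exp_ofReal_mul_I _
    have h1 := nrm_sub_le (TT q s (herm n))
      (Complex.exp (-Complex.I * s * ((n : ℂ) + 1 / 2)) • herm n)
    rw [(rep_TT q s).hN, nrm_smul, hz, one_mul] at h1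
    have h2 := mul_le_mul_of_nonneg_left h1 (norm_nonneg (hermC n : ℂ))
    have h3 : 1 ≤ 1 / δ ^ (2 * q + 3) * |s| ^ (2 * q + 3) := by
      rw [one_div_mul_eq_div, one_le_div hδm]
      exact pow_le_pow_left₀ hδ.le hs _
    have h4 : (0 : ℝ) ≤ n := n.cast_nonneg
    have h5 : 0 ≤ C * ((n : ℝ) + 2) * |s| ^ (2 * q + 3) := by positivity
    have h6 := mul_le_mul_of_nonneg_left h3 (show (0 : ℝ) ≤ n + 2 by linarith)
    linarith

end
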